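/- Let $1 < r < 2$ and suppose $m$ satisfies $\|m\|_{Y(r',d/r)} \le B$. Let $Tf = \mathcal{F}^{-1}[m\widehat f]$ and let $S(g) = (\sum_{k \ge 0} |\mathbb{D}_k g|^2)^{1/2}$ be the dyadic martingale square function. Then there is a constant $A_r$ (depending on $r$, $d$ and the cutoffs) such that pointwise a.e., $S(Tf)(x) \le A_r B \, G_r(f)(x)$, where $G_r(f) = \big( \sum_{k \in \mathbb{Z}} (\mathfrak{M}[|L_k f|^r])^{2/r} \big)^{1/2}$, $\mathfrak{M} = M \circ M \circ M$ is the threefold Hardy–Littlewood maximal operator, and $L_k$ is the Littlewood–Paley operator $\widehat{L_k f}(\xi) = \psi(2^{-k}\xi)\widehat f(\xi)$ for a suitable bump $\psi$ equal to 1 on the support of $\phi$. -/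

import Mathlib

open MeasureTheory Metric ENNReal RealInnerProductSpace

noncomputable section

abbrev Vd (d : ℕ) := EuclideanSpace ℝ (Fin d)

/-- Fourier transform, defined by the (Bochner) integral. -/
def FT {d : ℕ} (g : Vd d → ℂ) (ξ : Vd d) : ℂ :=
  ∫ x, Complex.exp (-(2 * Real.pi * ⟪x, ξ⟫) * Complex.I) * g x

/-- Inverse Fourier transform, defined by the (Bochner) integral. -/
def FTinv {d : ℕ} (g : Vd d → ℂ) (x : Vd d) : ℂ :=
  ∫ ξ, Complex.exp ((2 * Real.pi * ⟪ξ, x⟫) * Complex.I) * g ξ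

/-- Hardy–Littlewood maximal function (of an `ℝ≥0∞`-valued function). -/
def HLMax {d : ℕ} (g : Vd d → ℝ≥0∞) (x : Vd d) : ℝ≥0∞ :=
  ⨆ (r : ℝ) (_ : 0 < r), (volume (ball x r))⁻¹ * ∫⁻ y in ball x r, g y

/-- The dyadic cube of generation `k` containing `x`. -/
def dyadCube {d : ℕ} (k : ℤ) (x : Vd d) : Set (Vd d) :=
  {y | ∀ i, ⌊(2:ℝ) ^ k * y i⌋ = ⌊(2:ℝ) ^ k * x i⌋}

/-- Dyadic conditional expectation at generation `k`. -/
def Ek {d : ℕ} (k : ℤ) (f : Vd d → ℂ) (x : Vd d) : ℂ :=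
  ((2:ℝ) ^ (k * (d : ℤ))) • ∫ y in dyadCube k x, f y

/-- The dyadic martingale square function `S(g) = (∑_{k≥0} |E_{k+1}g - E_k g|²)^{1/2}`. -/
def sqFun {d : ℕ} (g : Vd d → ℂ) (x : Vd d) : ℝ≥0∞ :=
  (∑' k : ℕ, (‖Ek ((k : ℤ) + 1) g x - Ek (k : ℤ) g x‖₊ : ℝ≥0∞) ^ 2) ^ (1/2 : ℝ)

/-- The family `η_ℓ`: `η_0`, and `η_ℓ = η_0(2^{-ℓ}·) - η_0(2^{-ℓ+1}·)` for `ℓ > 0`. -/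
def etaFam {d : ℕ} (η0 : Vd d → ℝ) : ℕ → Vd d → ℝ :=
  fun ℓ x => if ℓ = 0 then η0 x
    else η0 ((2:ℝ) ^ (-(ℓ:ℤ)) • x) - η0 ((2:ℝ) ^ (-(ℓ:ℤ) + 1) • x)

/-- The kernel pieces `H_{k,ℓ}[m] = η_ℓ · F^{-1}[φ m(2^k ·)]`. -/
def Hkl {d : ℕ} (φ : Vd d → ℝ) (η : ℕ → Vd d → ℝ) (m : Vd d → ℂ) (k : ℤ) (ℓ : ℕ) :
    Vd d → ℂ :=
  fun x => (η ℓ x : ℂ) * FTinv (fun ξ => (φ ξ : ℂ) * m ((2:ℝ) ^ k • ξ)) x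

/-- The `Y(q,α)` norm: `sup_k ∑_ℓ 2^{ℓα} ‖H_{k,ℓ}[m]‖_{L^q}`. -/
def Ynorm {d : ℕ} (φ : Vd d → ℝ) (η : ℕ → Vd d → ℝ) (q : ℝ≥0∞) (α : ℝ) (m : Vd d → ℂ) :
    ℝ≥0∞ :=
  ⨆ k : ℤ, ∑' ℓ : ℕ, ENNReal.ofReal ((2:ℝ) ^ ((ℓ : ℝ) * α)) *
    eLpNorm (Hkl φ η m k ℓ) q volume

/-!
With `T_n f` the piece of `T f` at frequency `2ⁿ`, `T f = ∑ₙ T_n f`, and by dilation it is enough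
to understand `n = 0`. There `T_0 f = K ∗ L_0 f`, where Hölder's inequality on the pieces `η_ℓ K`
gives `|T_0 f| ≲ B · M(|L_0 f|^r)^{1/r}`. Moreover `T_0 f = Ψ ∗ T_0 f` for the Schwartz function
`Ψ = F⁻¹ψ`, whose integral is `ψ(0) = 0`. Smoothness of `Ψ` yields `|E_j g - g| ≲ 2^{-j}` for
`g = T_0 f` and `j ≥ 0`. For `j ≤ 0` the cancellation of `Ψ` leaves only the contribution of a
unit neighbourhood of the boundary of the dyadic cube, and Hölder's inequality on that thin set
yields `|E_j g| ≲ 2^{j/r'}`. Hence `|D_k T_n f|` decays like `2^{-|k-n|/r'}` times a maximal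
function of `|L_n f|^r`, and Young's inequality `ℓ¹ ∗ ℓ² ⊆ ℓ²` sums over `n`.
-/

section ENNRealSums

lemma sq_tsum_mul_le {ι : Type*} (w a : ι → ℝ≥0∞) :
    (∑' i, w i * a i) ^ 2 ≤ (∑' i, w i) * ∑' i, w i * a i ^ 2 := by
  suffices h : ∑' i, w i * a i ≤ ((∑' i, w i) * ∑' i, w i * a i ^ 2) ^ (2⁻¹ : ℝ) by
    simpa using (ENNReal.le_rpow_inv_iff two_pos).1 h
  refine ENNReal.summable.tsum_le_of_sum_le fun s => ?_
  have h := ENNReal.inner_le_weight_mul_Lp_of_nonneg s one_le_two w a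
  rw [show (1 : ℝ) - 2⁻¹ = 2⁻¹ by norm_num, ← ENNReal.mul_rpow_of_nonneg _ _ (by norm_num)] at h
  refine h.trans ?_
  simp only [ENNReal.rpow_two]
  gcongr <;> exact ENNReal.sum_le_tsum s

lemma tsum_sq_tsum_sub_mul_le {G : Type*} [AddCommGroup G] (w a : G → ℝ≥0∞) :
    ∑' k, (∑' n, w (k - n) * a n) ^ 2 ≤ (∑' j, w j) ^ 2 * ∑' n, a n ^ 2 := by
  have hleft (k : G) : ∑' n, w (k - n) = ∑' j, w j := (Equiv.subLeft k).tsum_eq w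
  have hright (n : G) : ∑' k, w (k - n) = ∑' j, w j := (Equiv.subRight n).tsum_eq w
  calc ∑' k, (∑' n, w (k - n) * a n) ^ 2
      ≤ ∑' k, (∑' j, w j) * ∑' n, w (k - n) * a n ^ 2 := by
        gcongr with k
        exact (sq_tsum_mul_le _ _).trans_eq (by rw [hleft])
    _ = (∑' j, w j) ^ 2 * ∑' n, a n ^ 2 := by
        rw [ENNReal.tsum_mul_left, ENNReal.tsum_comm]
        simp only [ENNReal.tsum_mul_right, hright, ENNReal.tsum_mul_left]
        ring

end ENNRealSums

section MaximalFunction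

variable {d : ℕ}

lemma setLIntegral_le_rpow_mul_measure_rpow {α : Type*} [MeasurableSpace α] {μ : Measure α}
    {r q : ℝ} (hrq : r.HolderConjugate q) (S : Set α) {G : α → ℝ≥0∞}
    (hG : AEMeasurable G (μ.restrict S)) :
    ∫⁻ y in S, G y ∂μ ≤ (∫⁻ y in S, G y ^ r ∂μ) ^ (1 / r) * μ S ^ (1 / q) := by
  simpa using ENNReal.lintegral_mul_le_Lp_mul_Lq (μ.restrict S) hrq hG
    (aemeasurable_const (b := 1))

lemma HLMax_le_iff {G : Vd d → ℝ≥0∞} {x : Vd d} {c : ℝ≥0∞} :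
    HLMax G x ≤ c ↔ ∀ ρ : ℝ, 0 < ρ → ∫⁻ y in ball x ρ, G y ≤ volume (ball x ρ) * c := by
  simp only [HLMax, iSup_le_iff]
  refine forall₂_congr fun ρ hρ => ENNReal.inv_mul_le_iff (measure_ball_pos _ _ hρ).ne'
    measure_ball_lt_top.ne

lemma setLIntegral_ball_le_mul_HLMax (G : Vd d → ℝ≥0∞) (x : Vd d) {ρ : ℝ} (hρ : 0 < ρ) :
    ∫⁻ y in ball x ρ, G y ≤ volume (ball x ρ) * HLMax G x :=
  HLMax_le_iff.1 le_rfl ρ hρ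

lemma HLMax_mono {G H : Vd d → ℝ≥0∞} (h : G ≤ H) : HLMax G ≤ HLMax H := fun x =>
  HLMax_le_iff.2 fun _ hρ =>
    (lintegral_mono h).trans (setLIntegral_ball_le_mul_HLMax H x hρ)

lemma HLMax_const_mul_le {c : ℝ≥0∞} (hc : c ≠ ∞) (G : Vd d → ℝ≥0∞) (x : Vd d) :
    HLMax (fun y => c * G y) x ≤ c * HLMax G x := by
  refine HLMax_le_iff.2 fun ρ hρ => ?_
  rw [lintegral_const_mul' _ _ hc, mul_left_comm]
  gcongr
  exact setLIntegral_ball_le_mul_HLMax G x hρ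

lemma HLMax_le_rpow_HLMax_rpow {r q : ℝ} (hrq : r.HolderConjugate q) {G : Vd d → ℝ≥0∞}
    (hG : AEMeasurable G) (x : Vd d) :
    HLMax G x ≤ HLMax (fun y => G y ^ r) x ^ (1 / r) := by
  refine HLMax_le_iff.2 fun ρ hρ => ?_
  have hr : 0 ≤ 1 / r := hrq.one_div_nonneg
  calc ∫⁻ y in ball x ρ, G y
      ≤ (∫⁻ y in ball x ρ, G y ^ r) ^ (1 / r) * volume (ball x ρ) ^ (1 / q) :=
        setLIntegral_le_rpow_mul_measure_rpow hrq _ hG.restrict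
    _ ≤ (volume (ball x ρ) * HLMax (fun y => G y ^ r) x) ^ (1 / r)
          * volume (ball x ρ) ^ (1 / q) := by
        gcongr
        exact setLIntegral_ball_le_mul_HLMax _ x hρ
    _ = volume (ball x ρ) * HLMax (fun y => G y ^ r) x ^ (1 / r) := by
        rw [ENNReal.mul_rpow_of_nonneg _ _ hr, mul_right_comm,
          ← ENNReal.rpow_add _ _ (measure_ball_pos _ _ hρ).ne' measure_ball_lt_top.ne,
          hrq.one_div_add_one_div, div_one, ENNReal.rpow_one]

lemma volume_ball_mul (x y : Vd d) {s ρ : ℝ} (hs : 0 < s) :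
    volume (ball x (s * ρ)) = ENNReal.ofReal (s ^ d) * volume (ball y ρ) := by
  rw [Measure.addHaar_ball_mul_of_pos volume x hs, finrank_euclideanSpace_fin,
    Measure.addHaar_ball_center volume y]

lemma HLMax_le_two_pow_mul_HLMax_HLMax (G : Vd d → ℝ≥0∞) (x : Vd d) :
    HLMax G x ≤ 2 ^ d * HLMax (HLMax G) x := by
  refine HLMax_le_iff.2 fun ρ hρ => ?_
  have hlower : ∀ y ∈ ball x ρ,
      (∫⁻ z in ball x ρ, G z) / volume (ball x ρ) ≤ 2 ^ d * HLMax G y := by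
    intro y hy
    have hsub : ball x ρ ⊆ ball y (2 * ρ) := by
      refine ball_subset_ball' ?_
      linarith [mem_ball'.1 hy]
    refine ENNReal.div_le_of_le_mul ?_
    calc ∫⁻ z in ball x ρ, G z ≤ volume (ball y (2 * ρ)) * HLMax G y :=
          (lintegral_mono_set hsub).trans
            (setLIntegral_ball_le_mul_HLMax G y (by positivity))
      _ = 2 ^ d * HLMax G y * volume (ball x ρ) := by
          rw [volume_ball_mul y x two_pos, ENNReal.ofReal_pow zero_le_two,
            ENNReal.ofReal_ofNat]
          ring
  calc ∫⁻ y in ball x ρ, G y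
      = ∫⁻ _ in ball x ρ, (∫⁻ z in ball x ρ, G z) / volume (ball x ρ) := by
        rw [setLIntegral_const, ENNReal.div_mul_cancel (measure_ball_pos _ _ hρ).ne'
          measure_ball_lt_top.ne]
    _ ≤ ∫⁻ y in ball x ρ, 2 ^ d * HLMax G y := setLIntegral_mono' measurableSet_ball hlower
    _ = 2 ^ d * ∫⁻ y in ball x ρ, HLMax G y := lintegral_const_mul' _ _ (by simp)
    _ ≤ 2 ^ d * (volume (ball x ρ) * HLMax (HLMax G) x) := by
        gcongr
        exact setLIntegral_ball_le_mul_HLMax _ x hρ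
    _ = volume (ball x ρ) * (2 ^ d * HLMax (HLMax G) x) := mul_left_comm _ _ _

lemma setLIntegral_ball_smul (G : Vd d → ℝ≥0∞) {s : ℝ} (hs : 0 < s) (x : Vd d) (ρ : ℝ) :
    ∫⁻ y in ball (s • x) (s * ρ), G y
      = ENNReal.ofReal (s ^ d) * ∫⁻ y in ball x ρ, G (s • y) := by
  have hemb : MeasurableEmbedding (fun y : Vd d => s • y) :=
    (Homeomorph.smulOfNeZero s hs.ne').measurableEmbedding
  have hpre : (fun y : Vd d => s • y) ⁻¹' ball (s • x) (s * ρ) = ball x ρ := by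
    ext y
    simp [dist_smul₀, abs_of_pos hs, hs]
  rw [← hpre, ← hemb.lintegral_map (μ := volume.restrict _), ← hemb.restrict_map,
    Measure.map_addHaar_smul volume hs.ne', finrank_euclideanSpace_fin, Measure.restrict_smul,
    lintegral_smul_measure, smul_eq_mul, ← mul_assoc, ← ENNReal.ofReal_mul (by positivity),
    abs_of_pos (by positivity), mul_inv_cancel₀ (by positivity), ENNReal.ofReal_one, one_mul]

lemma HLMax_comp_smul (G : Vd d → ℝ≥0∞) {s : ℝ} (hs : 0 < s) :
    HLMax (fun y => G (s • y)) = fun x => HLMax G (s • x) := by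
  funext x
  refine le_antisymm (HLMax_le_iff.2 fun ρ hρ => ?_) (HLMax_le_iff.2 fun ρ hρ => ?_)
  · have h := setLIntegral_ball_le_mul_HLMax G (s • x) (mul_pos hs hρ)
    rwa [setLIntegral_ball_smul G hs, volume_ball_mul _ x hs, mul_assoc,
      ENNReal.mul_le_mul_iff_right (by simp [pow_pos hs]) ENNReal.ofReal_ne_top] at h
  · obtain ⟨ρ, rfl⟩ : ∃ ρ', ρ = s * ρ' := ⟨s⁻¹ * ρ, by field_simp⟩
    rw [setLIntegral_ball_smul G hs, volume_ball_mul _ x hs, mul_assoc]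
    gcongr
    exact setLIntegral_ball_le_mul_HLMax _ x (pos_of_mul_pos_right hρ hs.le)

lemma ofReal_inv_one_add_norm_pow_mul_le_tsum (G : Vd d → ℝ≥0∞) (x z : Vd d) (N : ℕ) :
    ENNReal.ofReal ((1 + ‖x - z‖) ^ N)⁻¹ * G z ≤ ∑' R : ℕ,
      ENNReal.ofReal (((R : ℝ) + 1) ^ N)⁻¹ * (ball x ((R : ℝ) + 1)).indicator G z := by
  refine le_trans ?_ (ENNReal.le_tsum ⌊‖x - z‖⌋₊)
  have hz : z ∈ ball x (⌊‖x - z‖⌋₊ + 1) := by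
    rw [mem_ball', dist_eq_norm]
    exact Nat.lt_floor_add_one _
  rw [Set.indicator_of_mem hz, add_comm 1]
  gcongr
  exact Nat.floor_le (norm_nonneg _)

lemma exists_lintegral_inv_one_add_norm_pow_mul_le (d : ℕ) : ∃ C : ℝ≥0∞, C ≠ ∞ ∧
    ∀ G : Vd d → ℝ≥0∞, AEMeasurable G → ∀ x,
      ∫⁻ z, ENNReal.ofReal ((1 + ‖x - z‖) ^ (d + 2))⁻¹ * G z ≤ C * HLMax G x := by
  have hsum : Summable fun R : ℕ => (((R : ℝ) + 1) ^ 2)⁻¹ := by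
    exact_mod_cast (summable_nat_add_iff 1).2 (Real.summable_nat_pow_inv.2 one_lt_two)
  refine ⟨(∑' R : ℕ, ENNReal.ofReal (((R : ℝ) + 1) ^ 2)⁻¹) * volume (ball (0 : Vd d) 1),
    ENNReal.mul_ne_top hsum.tsum_ofReal_ne_top measure_ball_lt_top.ne, fun G hG x => ?_⟩
  refine (lintegral_mono fun z => ofReal_inv_one_add_norm_pow_mul_le_tsum G x z _).trans ?_
  rw [lintegral_tsum fun R => (hG.indicator measurableSet_ball).const_mul _, mul_assoc,
    ← ENNReal.tsum_mul_right]
  refine ENNReal.tsum_le_tsum fun R => ?_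
  have hR : (0 : ℝ) < R + 1 := by positivity
  rw [lintegral_const_mul' _ _ ofReal_ne_top, lintegral_indicator measurableSet_ball]
  calc ENNReal.ofReal (((R : ℝ) + 1) ^ (d + 2))⁻¹ * ∫⁻ z in ball x (R + 1), G z
      ≤ ENNReal.ofReal (((R : ℝ) + 1) ^ (d + 2))⁻¹ *
          (volume (ball x ((R + 1) * 1)) * HLMax G x) := by
        gcongr
        simpa only [mul_one] using setLIntegral_ball_le_mul_HLMax G x hR
    _ = ENNReal.ofReal (((R : ℝ) + 1) ^ 2)⁻¹ * (volume (ball (0 : Vd d) 1) * HLMax G x) := by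
        rw [volume_ball_mul x 0 hR, mul_assoc, ← mul_assoc,
          ← ENNReal.ofReal_mul (by positivity)]
        congr 2
        rw [pow_add]
        field_simp

end MaximalFunction

section Kernels

variable {d : ℕ}

/-- The norm `∑_ℓ 2^{ℓα} ‖η_ℓ K‖_{L^q}` of a convolution kernel `K`. The `Y(q,α)` norm of a
multiplier is the supremum over dyadic dilations of the norms of its localized kernels. -/
def kernelNorm (η : ℕ → Vd d → ℝ) (q : ℝ≥0∞) (α : ℝ) (K : Vd d → ℂ) : ℝ≥0∞ :=
  ∑' ℓ : ℕ, ENNReal.ofReal ((2 : ℝ) ^ ((ℓ : ℝ) * α)) *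
    eLpNorm (fun x => (η ℓ x : ℂ) * K x) q volume

lemma kernelNorm_le_Ynorm (φ : Vd d → ℝ) (η : ℕ → Vd d → ℝ) (q : ℝ≥0∞) (α : ℝ) (m : Vd d → ℂ)
    (k : ℤ) :
    kernelNorm η q α (FTinv fun ξ => (φ ξ : ℂ) * m ((2 : ℝ) ^ k • ξ)) ≤ Ynorm φ η q α m :=
  le_iSup (fun k : ℤ => kernelNorm η q α (FTinv fun ξ => (φ ξ : ℂ) * m ((2 : ℝ) ^ k • ξ))) k

lemma measurable_etaFam {η0 : Vd d → ℝ} (hη0 : Measurable η0) (ℓ : ℕ) :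
    Measurable (etaFam η0 ℓ) := by
  unfold etaFam
  split_ifs <;> fun_prop

lemma sum_range_etaFam (η0 : Vd d → ℝ) (x : Vd d) (N : ℕ) :
    ∑ ℓ ∈ Finset.range (N + 1), etaFam η0 ℓ x = η0 ((2 : ℝ) ^ (-(N : ℤ)) • x) := by
  induction N with
  | zero => simp [etaFam]
  | succ n ih =>
    rw [Finset.sum_range_succ, ih, etaFam, if_neg n.succ_ne_zero,
      show -((n + 1 : ℕ) : ℤ) + 1 = -(n : ℤ) by push_cast; ring, add_sub_cancel]

lemma one_le_tsum_enorm_etaFam {η0 : Vd d → ℝ} (hη01 : ∀ x : Vd d, ‖x‖ ≤ 1 / 2 → η0 x = 1)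
    (x : Vd d) : 1 ≤ ∑' ℓ : ℕ, ‖(etaFam η0 ℓ x : ℂ)‖ₑ := by
  obtain ⟨N, hN⟩ := pow_unbounded_of_one_lt (2 * ‖x‖) (one_lt_two (α := ℝ))
  have hscaled : ‖(2 : ℝ) ^ (-(N : ℤ)) • x‖ ≤ 1 / 2 := by
    rw [norm_smul, norm_zpow, zpow_neg, zpow_natCast, Real.norm_ofNat,
      inv_mul_le_iff₀ (by positivity)]
    linarith
  calc (1 : ℝ≥0∞) = ‖∑ ℓ ∈ Finset.range (N + 1), (etaFam η0 ℓ x : ℂ)‖ₑ := by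
        rw [← Complex.ofReal_sum, sum_range_etaFam, hη01 _ hscaled, Complex.ofReal_one, enorm_one]
    _ ≤ ∑ ℓ ∈ Finset.range (N + 1), ‖(etaFam η0 ℓ x : ℂ)‖ₑ := enorm_sum_le _ _
    _ ≤ ∑' ℓ : ℕ, ‖(etaFam η0 ℓ x : ℂ)‖ₑ := ENNReal.sum_le_tsum _

lemma support_etaFam_subset_ball {η0 : Vd d → ℝ} (hη0s : Function.support η0 ⊆ closedBall 0 1)
    (ℓ : ℕ) : Function.support (etaFam η0 ℓ) ⊆ ball 0 (2 ^ ℓ * 2) := by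
  intro x hx
  have hzero : ∀ j : ℤ, (2 : ℝ) ^ j < ‖x‖ → η0 ((2 : ℝ) ^ (-j) • x) = 0 := by
    intro j hj
    by_contra h
    have := hη0s h
    rw [mem_closedBall, dist_zero_right, norm_smul, norm_zpow, zpow_neg, Real.norm_ofNat,
      inv_mul_le_iff₀ (by positivity)] at this
    linarith
  by_contra hfar
  rw [mem_ball_zero_iff, not_lt] at hfar
  have hpos : (0 : ℝ) < 2 ^ ℓ := by positivity
  have hℓ : η0 ((2 : ℝ) ^ (-(ℓ : ℤ)) • x) = 0 := hzero ℓ (by rw [zpow_natCast]; linarith)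
  refine hx ?_
  unfold etaFam
  split_ifs with h0
  · simpa [h0] using hℓ
  · rw [hℓ, neg_add_eq_sub, ← neg_sub (ℓ : ℤ) 1, hzero, sub_zero]
    rw [zpow_sub_one₀ two_ne_zero, zpow_natCast]
    linarith

lemma lintegral_enorm_mul_le_of_support_subset_ball {r q : ℝ} (hrq : r.HolderConjugate q)
    {H : Vd d → ℂ} (hH : AEMeasurable H) {ρ : ℝ} (hρ : 0 < ρ)
    (hsupp : Function.support H ⊆ ball 0 ρ) {G : Vd d → ℝ≥0∞} (hG : AEMeasurable G) (y : Vd d) :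
    ∫⁻ z, ‖H z‖ₑ * G (y - z) ≤ eLpNorm H (ENNReal.ofReal q) volume *
      (volume (ball y ρ) * HLMax (fun z => G z ^ r) y) ^ (1 / r) := by
  have hr : 0 ≤ 1 / r := hrq.one_div_nonneg
  have hGy : AEMeasurable fun z => G (y - z) :=
    hG.comp_quasiMeasurePreserving (quasiMeasurePreserving_sub_left volume y)
  have hball : (fun z => y - z) ⁻¹' ball y ρ = ball 0 ρ := by
    ext z
    simp [dist_eq_norm]
  have hreflect : ∫⁻ z in ball 0 ρ, G (y - z) ^ r = ∫⁻ z in ball y ρ, G z ^ r := by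
    rw [← hball]
    exact (Measure.measurePreserving_sub_left volume y).setLIntegral_comp_preimage_emb
      (MeasurableEquiv.subLeft y).measurableEmbedding (fun z => G z ^ r) _
  calc ∫⁻ z, ‖H z‖ₑ * G (y - z)
      = ∫⁻ z in ball 0 ρ, ‖H z‖ₑ * G (y - z) := by
        refine (setLIntegral_eq_of_support_subset fun z hz => hsupp fun h => hz ?_).symm
        simp [h]
    _ ≤ (∫⁻ z in ball 0 ρ, ‖H z‖ₑ ^ q) ^ (1 / q) * (∫⁻ z in ball 0 ρ, G (y - z) ^ r) ^ (1 / r) :=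
        ENNReal.lintegral_mul_le_Lp_mul_Lq _ hrq.symm hH.enorm.restrict hGy.restrict
    _ ≤ eLpNorm H (ENNReal.ofReal q) volume *
          (volume (ball y ρ) * HLMax (fun z => G z ^ r) y) ^ (1 / r) := by
        rw [eLpNorm_eq_lintegral_rpow_enorm_toReal (by simpa using hrq.symm.pos) ofReal_ne_top,
          ENNReal.toReal_ofReal hrq.symm.nonneg, hreflect]
        have hq : 0 ≤ 1 / q := hrq.symm.one_div_nonneg
        gcongr
        · exact Measure.restrict_le_self
        · exact setLIntegral_ball_le_mul_HLMax _ y hρ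

lemma volume_ball_two_pow_mul_rpow (y : Vd d) {r : ℝ} (hr : 0 ≤ r) (ℓ : ℕ) :
    volume (ball y (2 ^ ℓ * 2)) ^ (1 / r) = ENNReal.ofReal ((2 : ℝ) ^ ((ℓ : ℝ) * (d / r))) *
      volume (ball (0 : Vd d) 2) ^ (1 / r) := by
  rw [volume_ball_mul y 0 (by positivity), ENNReal.mul_rpow_of_nonneg _ _ (by positivity),
    ENNReal.ofReal_rpow_of_pos (by positivity), ← Real.rpow_natCast, ← Real.rpow_natCast,
    ← Real.rpow_mul two_pos.le, ← Real.rpow_mul two_pos.le]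
  ring_nf

lemma exists_lintegral_enorm_mul_le_kernelNorm (d : ℕ) {r q : ℝ} (hrq : r.HolderConjugate q) :
    ∃ C : ℝ≥0∞, C ≠ ∞ ∧ ∀ η0 : Vd d → ℝ, Measurable η0 → (∀ x : Vd d, ‖x‖ ≤ 1 / 2 → η0 x = 1) →
      Function.support η0 ⊆ closedBall 0 1 → ∀ K : Vd d → ℂ, AEMeasurable K →
      ∀ G : Vd d → ℝ≥0∞, AEMeasurable G → ∀ y,
        ∫⁻ z, ‖K z‖ₑ * G (y - z) ≤ C * kernelNorm (etaFam η0) (ENNReal.ofReal q) (d / r) K *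
          HLMax (fun z => G z ^ r) y ^ (1 / r) := by
  have hr : 0 ≤ 1 / r := hrq.one_div_nonneg
  refine ⟨volume (ball (0 : Vd d) 2) ^ (1 / r),
    ENNReal.rpow_ne_top_of_nonneg hr measure_ball_lt_top.ne,
    fun η0 hη0 hη01 hη0s K hK G hG y => ?_⟩
  have hpiece (ℓ : ℕ) : AEMeasurable fun z => (etaFam η0 ℓ z : ℂ) * K z :=
    (Complex.measurable_ofReal.comp (measurable_etaFam hη0 ℓ)).aemeasurable.mul hK
  have hGy : AEMeasurable fun z => G (y - z) :=
    hG.comp_quasiMeasurePreserving (quasiMeasurePreserving_sub_left volume y)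
  calc ∫⁻ z, ‖K z‖ₑ * G (y - z)
      ≤ ∫⁻ z, ∑' ℓ, ‖(etaFam η0 ℓ z : ℂ) * K z‖ₑ * G (y - z) := by
        gcongr with z
        simp only [enorm_mul, mul_assoc, ENNReal.tsum_mul_right]
        exact le_mul_of_one_le_left' (one_le_tsum_enorm_etaFam hη01 z)
    _ = ∑' ℓ, ∫⁻ z, ‖(etaFam η0 ℓ z : ℂ) * K z‖ₑ * G (y - z) :=
        lintegral_tsum fun ℓ => (hpiece ℓ).enorm.mul hGy
    _ ≤ ∑' ℓ, eLpNorm (fun z => (etaFam η0 ℓ z : ℂ) * K z) (ENNReal.ofReal q) volume *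
          (volume (ball y (2 ^ ℓ * 2)) * HLMax (fun z => G z ^ r) y) ^ (1 / r) := by
        gcongr with ℓ
        refine lintegral_enorm_mul_le_of_support_subset_ball hrq (hpiece ℓ) (by positivity)
          (fun z hz => support_etaFam_subset_ball hη0s ℓ fun h => hz ?_) hG y
        simp [h]
    _ = volume (ball (0 : Vd d) 2) ^ (1 / r) *
          kernelNorm (etaFam η0) (ENNReal.ofReal q) (d / r) K *
          HLMax (fun z => G z ^ r) y ^ (1 / r) := by
        rw [kernelNorm, ← ENNReal.tsum_mul_left, ← ENNReal.tsum_mul_right]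
        congr! 2 with ℓ
        rw [ENNReal.mul_rpow_of_nonneg _ _ hr, volume_ball_two_pow_mul_rpow y hrq.nonneg]
        ring

end Kernels

section DyadicCubes

variable {d : ℕ}

/-- The half-open dyadic interval of length `2^{-k}` containing `t`: the sides of the dyadic
cubes. -/
def dyadInterval (k : ℤ) (t : ℝ) : Set ℝ :=
  Set.Ico ((2 : ℝ) ^ (-k) * ⌊(2 : ℝ) ^ k * t⌋) ((2 : ℝ) ^ (-k) * ⌊(2 : ℝ) ^ k * t⌋ + (2 : ℝ) ^ (-k))

lemma mem_dyadInterval {k : ℤ} {s t : ℝ} :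
    s ∈ dyadInterval k t ↔ ⌊(2 : ℝ) ^ k * s⌋ = ⌊(2 : ℝ) ^ k * t⌋ := by
  have hk : (0 : ℝ) < 2 ^ k := by positivity
  rw [dyadInterval, Set.mem_Ico, Int.floor_eq_iff, zpow_neg, inv_mul_le_iff₀ hk, ← mul_add_one,
    lt_inv_mul_iff₀ hk]

lemma measurableSet_dyadInterval (k : ℤ) (t : ℝ) : MeasurableSet (dyadInterval k t) :=
  measurableSet_Ico

lemma volume_dyadInterval (k : ℤ) (t : ℝ) :
    volume (dyadInterval k t) = ENNReal.ofReal ((2 : ℝ) ^ (-k)) := by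
  rw [dyadInterval, Real.volume_Ico, add_sub_cancel_left]

lemma abs_sub_le_of_mem_dyadInterval {k : ℤ} {s t : ℝ} (hs : s ∈ dyadInterval k t) :
    |s - t| ≤ (2 : ℝ) ^ (-k) := by
  have ht : t ∈ dyadInterval k t := mem_dyadInterval.2 rfl
  rw [abs_le]
  constructor <;> linarith [hs.1, hs.2, ht.1, ht.2]

lemma volume_Ico_diff_preimage_add_const_le (a b c : ℝ) :
    volume (Set.Ico a b \ (· + c) ⁻¹' Set.Ico a b) ≤ ENNReal.ofReal |c| := by
  rcases le_total 0 c with hc | hc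
  · have hsub : Set.Ico a b \ (· + c) ⁻¹' Set.Ico a b ⊆ Set.Ico (b - c) b := fun t ht =>
      ⟨le_of_not_gt fun h => ht.2 ⟨by linarith [ht.1.1], by linarith⟩, ht.1.2⟩
    simpa [abs_of_nonneg hc] using measure_mono (μ := volume) hsub
  · have hsub : Set.Ico a b \ (· + c) ⁻¹' Set.Ico a b ⊆ Set.Ico a (a - c) := fun t ht =>
      ⟨ht.1.1, lt_of_not_ge fun h => ht.2 ⟨by linarith, by linarith [ht.1.2]⟩⟩
    simpa [abs_of_nonpos hc] using measure_mono (μ := volume) hsub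

lemma measurableSet_preimage_ofLp_pi {J : Fin d → Set ℝ} (hJ : ∀ i, MeasurableSet (J i)) :
    MeasurableSet ((WithLp.ofLp : Vd d → Fin d → ℝ) ⁻¹' Set.univ.pi J) :=
  (PiLp.volume_preserving_ofLp (Fin d)).measurable (.univ_pi hJ)

lemma volume_preimage_ofLp_pi {J : Fin d → Set ℝ} (hJ : ∀ i, MeasurableSet (J i)) :
    volume ((WithLp.ofLp : Vd d → Fin d → ℝ) ⁻¹' Set.univ.pi J) = ∏ i, volume (J i) := by
  rw [(PiLp.volume_preserving_ofLp (Fin d)).measure_preimage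
    (MeasurableSet.univ_pi hJ).nullMeasurableSet, volume_pi_pi]

lemma volume_preimage_ofLp_pi_update {J : Fin d → Set ℝ} (hJ : ∀ i, MeasurableSet (J i))
    (i : Fin d) {s : Set ℝ} (hs : MeasurableSet s) :
    volume ((WithLp.ofLp : Vd d → Fin d → ℝ) ⁻¹' Set.univ.pi (Function.update J i s)) *
      volume (J i) =
    volume s * volume ((WithLp.ofLp : Vd d → Fin d → ℝ) ⁻¹' Set.univ.pi J) := by
  have hupdate (l : Fin d) : MeasurableSet (Function.update J i s l) := by
    rcases eq_or_ne l i with rfl | hl <;> simp [*]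
  rw [volume_preimage_ofLp_pi hupdate, volume_preimage_ofLp_pi hJ,
    ← Finset.mul_prod_erase _ _ (Finset.mem_univ i),
    ← Finset.mul_prod_erase _ (fun l => volume (J l)) (Finset.mem_univ i),
    Finset.prod_congr rfl fun l hl => by
      rw [Function.update_of_ne (Finset.ne_of_mem_erase hl)], Function.update_self]
  ring

lemma preimage_ofLp_pi_diff_preimage_add_subset (J : Fin d → Set ℝ) (w : Vd d) :
    (WithLp.ofLp ⁻¹' Set.univ.pi J : Set (Vd d)) \ (· + w) ⁻¹' (WithLp.ofLp ⁻¹' Set.univ.pi J) ⊆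
      ⋃ i, WithLp.ofLp ⁻¹' Set.univ.pi (Function.update J i (J i \ (· + w i) ⁻¹' J i)) := by
  rintro z ⟨hz, hzw⟩
  obtain ⟨i, hi⟩ : ∃ i, z i + w i ∉ J i := by simpa using hzw
  refine Set.mem_iUnion.2 ⟨i, fun l _ => ?_⟩
  rcases eq_or_ne l i with rfl | hl
  · simpa using ⟨hz l trivial, hi⟩
  · simpa [hl] using hz l trivial

lemma dyadCube_eq_preimage_pi (k : ℤ) (x : Vd d) :
    dyadCube k x = (WithLp.ofLp : Vd d → Fin d → ℝ) ⁻¹' Set.univ.pi fun i =>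
      dyadInterval k (x i) := by
  ext y
  simp [dyadCube, mem_dyadInterval]

lemma measurableSet_dyadCube (k : ℤ) (x : Vd d) : MeasurableSet (dyadCube k x) := by
  rw [dyadCube_eq_preimage_pi]
  exact measurableSet_preimage_ofLp_pi fun _ => measurableSet_dyadInterval _ _

lemma volume_dyadCube (k : ℤ) (x : Vd d) :
    volume (dyadCube k x) = ENNReal.ofReal (((2 : ℝ) ^ (-k)) ^ d) := by
  rw [dyadCube_eq_preimage_pi, volume_preimage_ofLp_pi fun _ => measurableSet_dyadInterval _ _]
  simp only [volume_dyadInterval, Finset.prod_const, Finset.card_univ, Fintype.card_fin,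
    ENNReal.ofReal_pow (zpow_nonneg two_pos.le _)]

lemma volume_dyadCube_ne_zero (k : ℤ) (x : Vd d) : volume (dyadCube k x) ≠ 0 := by
  rw [volume_dyadCube]
  simp only [ne_eq, ENNReal.ofReal_eq_zero, not_le]
  positivity

lemma volume_dyadCube_ne_top (k : ℤ) (x : Vd d) : volume (dyadCube k x) ≠ ∞ := by
  rw [volume_dyadCube]
  exact ofReal_ne_top

lemma norm_sub_le_of_mem_dyadCube {k : ℤ} {x y : Vd d} (hy : y ∈ dyadCube k x) :
    ‖y - x‖ ≤ √d * (2 : ℝ) ^ (-k) := by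
  have hcoord (i : Fin d) : ‖(y - x) i‖ ^ 2 ≤ ((2 : ℝ) ^ (-k)) ^ 2 := by
    gcongr
    exact abs_sub_le_of_mem_dyadInterval (mem_dyadInterval.2 (hy i))
  calc ‖y - x‖ = √(∑ i, ‖(y - x) i‖ ^ 2) := EuclideanSpace.norm_eq _
    _ ≤ √(∑ _i : Fin d, ((2 : ℝ) ^ (-k)) ^ 2) :=
        Real.sqrt_le_sqrt (Finset.sum_le_sum fun i _ => hcoord i)
    _ = √d * (2 : ℝ) ^ (-k) := by
        rw [Finset.sum_const, Finset.card_univ, Fintype.card_fin, nsmul_eq_mul,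
          Real.sqrt_mul d.cast_nonneg, Real.sqrt_sq (by positivity)]

lemma isBounded_dyadCube (k : ℤ) (x : Vd d) : Bornology.IsBounded (dyadCube k x) :=
  isBounded_closedBall.subset fun _ hy =>
    mem_closedBall_iff_norm.2 (norm_sub_le_of_mem_dyadCube hy)

lemma isBounded_preimage_add_dyadCube (k : ℤ) (x w : Vd d) :
    Bornology.IsBounded ((· + w) ⁻¹' dyadCube k x) :=
  (isBounded_closedBall (x := x - w)).subset fun y hy => by
    rw [mem_closedBall_iff_norm, sub_sub_eq_add_sub]
    exact norm_sub_le_of_mem_dyadCube hy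

lemma volume_dyadCube_diff_preimage_add_le (k : ℤ) (x w : Vd d) :
    volume (dyadCube k x \ (· + w) ⁻¹' dyadCube k x) ≤
      ENNReal.ofReal (d * ‖w‖ * (2 : ℝ) ^ k) * volume (dyadCube k x) := by
  set J : Fin d → Set ℝ := fun i => dyadInterval k (x i)
  set face : Fin d → Set (Vd d) := fun i =>
    WithLp.ofLp ⁻¹' Set.univ.pi (Function.update J i (J i \ (· + w i) ⁻¹' J i))
  have hJ (i : Fin d) : MeasurableSet (J i) := measurableSet_dyadInterval _ _
  have hcover : dyadCube k x \ (· + w) ⁻¹' dyadCube k x ⊆ ⋃ i, face i := by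
    rw [dyadCube_eq_preimage_pi]
    exact preimage_ofLp_pi_diff_preimage_add_subset J w
  have hface (i : Fin d) :
      volume (face i) ≤ ENNReal.ofReal (‖w‖ * (2 : ℝ) ^ k) * volume (dyadCube k x) := by
    have hthin : volume (J i \ (· + w i) ⁻¹' J i) ≤ ENNReal.ofReal ‖w‖ :=
      (volume_Ico_diff_preimage_add_const_le _ _ _).trans
        (ENNReal.ofReal_le_ofReal (PiLp.norm_apply_le w i))
    calc volume (face i)
        = volume (face i) * volume (J i) * ENNReal.ofReal ((2 : ℝ) ^ k) := by
          rw [volume_dyadInterval, mul_assoc, ← ENNReal.ofReal_mul (by positivity),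
            ← zpow_add₀ two_ne_zero, neg_add_cancel, zpow_zero, ENNReal.ofReal_one, mul_one]
      _ = volume (J i \ (· + w i) ⁻¹' J i) * volume (dyadCube k x) *
            ENNReal.ofReal ((2 : ℝ) ^ k) := by
          rw [volume_preimage_ofLp_pi_update hJ i
            ((hJ i).diff (measurable_add_const _ (hJ i))), ← dyadCube_eq_preimage_pi]
      _ ≤ ENNReal.ofReal ‖w‖ * volume (dyadCube k x) * ENNReal.ofReal ((2 : ℝ) ^ k) := by
          gcongr
      _ = ENNReal.ofReal (‖w‖ * (2 : ℝ) ^ k) * volume (dyadCube k x) := by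
          rw [ENNReal.ofReal_mul (norm_nonneg w), mul_right_comm]
  calc volume (dyadCube k x \ (· + w) ⁻¹' dyadCube k x)
      ≤ ∑ i, volume (face i) := (measure_mono hcover).trans (measure_iUnion_fintype_le _ _)
    _ ≤ ∑ _i : Fin d, ENNReal.ofReal (‖w‖ * (2 : ℝ) ^ k) * volume (dyadCube k x) :=
        Finset.sum_le_sum fun i _ => hface i
    _ = ENNReal.ofReal (d * ‖w‖ * (2 : ℝ) ^ k) * volume (dyadCube k x) := by
        rw [Finset.sum_const, Finset.card_univ, Fintype.card_fin, nsmul_eq_mul, ← mul_assoc,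
          mul_assoc (d : ℝ), ENNReal.ofReal_mul d.cast_nonneg, ENNReal.ofReal_natCast]

lemma volume_dyadCube_symmDiff_preimage_add_le (k : ℤ) (x w : Vd d) :
    volume (symmDiff (dyadCube k x) ((· + w) ⁻¹' dyadCube k x)) ≤
      ENNReal.ofReal (2 * d * ‖w‖ * (2 : ℝ) ^ k) * volume (dyadCube k x) := by
  have hreflect : (· + w) ⁻¹' dyadCube k x \ dyadCube k x =
      (· + w) ⁻¹' (dyadCube k x \ (· + -w) ⁻¹' dyadCube k x) := by
    ext z
    simp
  have hback := volume_dyadCube_diff_preimage_add_le k x (-w)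
  rw [← measure_preimage_add_right volume w, ← hreflect, norm_neg] at hback
  calc volume (symmDiff (dyadCube k x) ((· + w) ⁻¹' dyadCube k x))
      ≤ ENNReal.ofReal (d * ‖w‖ * (2 : ℝ) ^ k) * volume (dyadCube k x) +
          ENNReal.ofReal (d * ‖w‖ * (2 : ℝ) ^ k) * volume (dyadCube k x) :=
        (measure_union_le _ _).trans
          (add_le_add (volume_dyadCube_diff_preimage_add_le k x w) hback)
    _ = ENNReal.ofReal (2 * d * ‖w‖ * (2 : ℝ) ^ k) * volume (dyadCube k x) := by
        rw [← add_mul, ← ENNReal.ofReal_add (by positivity) (by positivity)]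
        ring_nf

lemma dyadCube_union_preimage_add_subset_ball {k : ℤ} (hk : k ≤ 0) (x w : Vd d) :
    dyadCube k x ∪ (· + w) ⁻¹' dyadCube k x ⊆
      ball x ((2 : ℝ) ^ (-k) * ((√d + 1) * (1 + ‖w‖))) := by
  have hscale : 1 ≤ (2 : ℝ) ^ (-k) := one_le_zpow₀ one_le_two (by lia)
  have hw := norm_nonneg w
  have hd := Real.sqrt_nonneg d
  rintro z (hz | hz) <;> rw [mem_ball_iff_norm] <;> have hz' := norm_sub_le_of_mem_dyadCube hz
  · nlinarith [mul_nonneg hd hw, mul_nonneg (zero_le_one.trans hscale) (mul_nonneg hd hw)]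
  · have := norm_sub_le (z + w - x) w
    rw [add_sub_right_comm, add_sub_cancel_right] at this
    rw [add_sub_right_comm] at hz'
    nlinarith [mul_nonneg hd hw, mul_nonneg (zero_le_one.trans hscale) (mul_nonneg hd hw)]

end DyadicCubes

section DyadicAverages

variable {d : ℕ}

lemma integrableOn_of_isBounded {g : Vd d → ℂ} (hg : LocallyIntegrable g) {s : Set (Vd d)}
    (hs : Bornology.IsBounded s) : IntegrableOn g s :=
  (hg.integrableOn_isCompact hs.isCompact_closure).mono_set subset_closure

lemma enorm_setIntegral_sub_setIntegral_le {α E : Type*} [MeasurableSpace α] {μ : Measure α}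
    [NormedAddCommGroup E] [NormedSpace ℝ E] {s t : Set α} {g : α → E} (hs : MeasurableSet s)
    (ht : MeasurableSet t) (hgs : IntegrableOn g s μ) (hgt : IntegrableOn g t μ) :
    ‖(∫ y in s, g y ∂μ) - ∫ y in t, g y ∂μ‖ₑ ≤ ∫⁻ y in symmDiff s t, ‖g y‖ₑ ∂μ := by
  have hsplit : (∫ y in s, g y ∂μ) - ∫ y in t, g y ∂μ =
      (∫ y in s \ t, g y ∂μ) - ∫ y in t \ s, g y ∂μ := by
    rw [← integral_inter_add_sdiff ht hgs, ← integral_inter_add_sdiff hs hgt, Set.inter_comm t s,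
      add_sub_add_left_eq_sub]
  rw [hsplit, Set.symmDiff_def, lintegral_union (ht.diff hs) disjoint_sdiff_sdiff]
  exact enorm_sub_le.trans
    (add_le_add (enorm_integral_le_lintegral_enorm _) (enorm_integral_le_lintegral_enorm _))

lemma Ek_eq_setAverage (k : ℤ) (g : Vd d → ℂ) (x : Vd d) :
    Ek k g x = ⨍ y in dyadCube k x, g y := by
  rw [Ek, setAverage_eq, Measure.real, volume_dyadCube, ENNReal.toReal_ofReal (by positivity),
    zpow_mul, zpow_natCast, zpow_neg, inv_pow, inv_inv]

lemma enorm_Ek_sub_Ek_le {k : ℤ} {g h : Vd d → ℂ} {x : Vd d} {c : ℝ≥0∞}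
    (hc : ‖(∫ y in dyadCube k x, g y) - ∫ y in dyadCube k x, h y‖ₑ ≤ volume (dyadCube k x) * c) :
    ‖Ek k g x - Ek k h x‖ₑ ≤ c := by
  have hinv : ‖(2 : ℝ) ^ (k * (d : ℤ))‖ₑ = (volume (dyadCube k x))⁻¹ := by
    rw [volume_dyadCube, Real.enorm_of_nonneg (by positivity), ← ENNReal.ofReal_inv_of_pos
      (by positivity), zpow_mul, zpow_natCast, zpow_neg, inv_pow, inv_inv]
  rw [Ek, Ek, ← smul_sub, enorm_smul, hinv,
    ENNReal.inv_mul_le_iff (volume_dyadCube_ne_zero k x) (volume_dyadCube_ne_top k x)]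
  exact hc

lemma enorm_Ek_sub_le {k : ℤ} {g : Vd d → ℂ} {x : Vd d} {c : ℝ≥0∞}
    (hg : IntegrableOn g (dyadCube k x)) (hc : ∀ y ∈ dyadCube k x, ‖g y - g x‖ₑ ≤ c) :
    ‖Ek k g x - g x‖ₑ ≤ c := by
  rw [Ek_eq_setAverage, ← edist_eq_enorm_sub, ← mem_closedEBall]
  induction c with
  | top => simp
  | coe c =>
    rw [closedEBall_coe]
    refine (convex_closedBall _ _).set_average_mem isClosed_closedBall
      (volume_dyadCube_ne_zero k x) (volume_dyadCube_ne_top k x) ?_ hg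
    filter_upwards [ae_restrict_mem (measurableSet_dyadCube k x)] with y hy
    rw [← closedEBall_coe, mem_closedEBall, edist_eq_enorm_sub]
    exact hc y hy

open scoped Pointwise in
lemma zpow_smul_dyadCube (k n : ℤ) (x : Vd d) :
    (2 : ℝ) ^ n • dyadCube k x = dyadCube (k - n) ((2 : ℝ) ^ n • x) := by
  have hs : (2 : ℝ) ^ n ≠ 0 := by positivity
  ext y
  have hcoord (t : ℝ) : (2 : ℝ) ^ (k - n) * t = 2 ^ k * ((2 ^ n)⁻¹ * t) := by
    rw [zpow_sub₀ two_ne_zero, div_eq_mul_inv, mul_assoc]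
  simp only [Set.mem_smul_set_iff_inv_smul_mem₀ hs, dyadCube, Set.mem_ofPred_eq,
    PiLp.smul_apply, smul_eq_mul, hcoord, inv_mul_cancel_left₀ hs]

lemma Ek_comp_zpow_smul (g : Vd d → ℂ) (k n : ℤ) (x : Vd d) :
    Ek k (fun y => g ((2 : ℝ) ^ n • y)) x = Ek (k - n) g ((2 : ℝ) ^ n • x) := by
  have hs : (0 : ℝ) < 2 ^ n := by positivity
  rw [Ek, Measure.setIntegral_comp_smul_of_pos _ g _ hs, zpow_smul_dyadCube,
    finrank_euclideanSpace_fin, smul_smul, Ek, ← zpow_natCast, ← zpow_mul, ← zpow_neg,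
    ← zpow_add₀ two_ne_zero]
  congr 2
  ring

lemma setLIntegral_le_mul_HLMax_rpow {r q : ℝ} (hrq : r.HolderConjugate q) {S : Set (Vd d)}
    {x : Vd d} {ρ : ℝ} (hρ : 0 < ρ) (hSρ : S ⊆ ball x ρ) {A τ : ℝ≥0∞}
    (hball : volume (ball x ρ) ≤ A) (hS : volume S ≤ A * τ) {G : Vd d → ℝ≥0∞}
    (hG : AEMeasurable G) :
    ∫⁻ y in S, G y ≤ A * (τ ^ (1 / q) * HLMax (fun y => G y ^ r) x ^ (1 / r)) := by
  have hr : 0 ≤ 1 / r := hrq.one_div_nonneg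
  have hq : 0 ≤ 1 / q := hrq.symm.one_div_nonneg
  calc ∫⁻ y in S, G y
      ≤ (∫⁻ y in S, G y ^ r) ^ (1 / r) * volume S ^ (1 / q) :=
        setLIntegral_le_rpow_mul_measure_rpow hrq S hG.restrict
    _ ≤ (A * HLMax (fun y => G y ^ r) x) ^ (1 / r) * (A * τ) ^ (1 / q) := by
        gcongr
        exact (lintegral_mono_set hSρ).trans
          ((setLIntegral_ball_le_mul_HLMax _ x hρ).trans (by gcongr))
    _ = A ^ (1 / r + 1 / q) * (τ ^ (1 / q) * HLMax (fun y => G y ^ r) x ^ (1 / r)) := by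
        rw [ENNReal.mul_rpow_of_nonneg _ _ hr, ENNReal.mul_rpow_of_nonneg _ _ hq,
          ENNReal.rpow_add_of_nonneg _ _ hr hq]
        ring
    _ = A * (τ ^ (1 / q) * HLMax (fun y => G y ^ r) x ^ (1 / r)) := by
        rw [hrq.one_div_add_one_div, div_one, ENNReal.rpow_one]

lemma exists_setLIntegral_symmDiff_dyadCube_le (d : ℕ) {r q : ℝ} (hrq : r.HolderConjugate q) :
    ∃ C : ℝ, 0 ≤ C ∧ ∀ k : ℤ, k ≤ 0 → ∀ (x w : Vd d) (G : Vd d → ℝ≥0∞), AEMeasurable G →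
      ∫⁻ y in symmDiff (dyadCube k x) ((· + w) ⁻¹' dyadCube k x), G y ≤
        volume (dyadCube k x) * (ENNReal.ofReal (C * (1 + ‖w‖) ^ (d + 1)) *
          (ENNReal.ofReal ((2 : ℝ) ^ k) ^ (1 / q) * HLMax (fun y => G y ^ r) x ^ (1 / r))) := by
  set V : ℝ := volume.real (ball (0 : Vd d) 1)
  refine ⟨(√d + 1) ^ d * V + 2 * d, by positivity, fun k hk x w G hG => ?_⟩
  have hw : 1 ≤ 1 + ‖w‖ := le_add_of_nonneg_right (norm_nonneg w)
  rw [← mul_assoc]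
  refine setLIntegral_le_mul_HLMax_rpow hrq (by positivity)
    ((symmDiff_le_sup).trans (dyadCube_union_preimage_add_subset_ball hk x w)) ?_ ?_ hG
  · rw [← mul_one (_ * _), volume_ball_mul x 0 (by positivity), volume_dyadCube,
      ← ofReal_measureReal, ← ENNReal.ofReal_mul (by positivity),
      ← ENNReal.ofReal_mul (by positivity), mul_pow, mul_pow, mul_assoc]
    refine ENNReal.ofReal_le_ofReal (mul_le_mul_of_nonneg_left ?_ (by positivity))
    calc (√d + 1) ^ d * (1 + ‖w‖) ^ d * V = (√d + 1) ^ d * V * (1 + ‖w‖) ^ d := by ring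
      _ ≤ ((√d + 1) ^ d * V + 2 * d) * (1 + ‖w‖) ^ (d + 1) := by
        gcongr
        · exact le_add_of_nonneg_right (by positivity)
        · exact d.le_succ
  · refine (volume_dyadCube_symmDiff_preimage_add_le k x w).trans ?_
    rw [mul_assoc (volume _), mul_comm (volume _), ← ENNReal.ofReal_mul (by positivity)]
    gcongr
    · exact le_add_of_nonneg_left (by positivity)
    · exact (le_add_of_nonneg_left zero_le_one).trans (le_self_pow₀ hw d.succ_ne_zero)

lemma exists_enorm_Ek_comp_sub_sub_Ek_le (d : ℕ) {r q : ℝ} (hrq : r.HolderConjugate q) :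
    ∃ C : ℝ, 0 ≤ C ∧ ∀ k : ℤ, k ≤ 0 → ∀ (x w : Vd d) (g : Vd d → ℂ), LocallyIntegrable g →
      ‖Ek k (fun y => g (y - w)) x - Ek k g x‖ₑ ≤ ENNReal.ofReal (C * (1 + ‖w‖) ^ (d + 1)) *
        (ENNReal.ofReal ((2 : ℝ) ^ k) ^ (1 / q) *
          HLMax (fun y => ‖g y‖ₑ ^ r) x ^ (1 / r)) := by
  obtain ⟨C, hC, hsymm⟩ := exists_setLIntegral_symmDiff_dyadCube_le d hrq
  refine ⟨C, hC, fun k hk x w g hg => enorm_Ek_sub_Ek_le ?_⟩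
  have htranslate : ∫ y in dyadCube k x, g (y - w) = ∫ y in (· + w) ⁻¹' dyadCube k x, g y := by
    rw [← (measurePreserving_add_right volume w).setIntegral_preimage_emb
      (measurableEmbedding_addRight w)]
    simp only [add_sub_cancel_right]
  rw [htranslate, enorm_sub_rev]
  exact (enorm_setIntegral_sub_setIntegral_le (measurableSet_dyadCube k x)
    (measurable_add_const w (measurableSet_dyadCube k x))
    (integrableOn_of_isBounded hg (isBounded_dyadCube k x))
    (integrableOn_of_isBounded hg (isBounded_preimage_add_dyadCube k x w))).trans
      (hsymm k hk x w _ hg.aestronglyMeasurable.enorm)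

end DyadicAverages

section ReproducedFunctions

open scoped Convolution SchwartzMap

variable {d : ℕ}

lemma exists_norm_schwartz_add_sub_le {E F : Type*} [NormedAddCommGroup E] [NormedSpace ℝ E]
    [NormedAddCommGroup F] [NormedSpace ℝ F] (Ψ : 𝓢(E, F)) {R : ℝ} (hR : 0 ≤ R) (N : ℕ) :
    ∃ C : ℝ, 0 ≤ C ∧ ∀ w h : E, ‖h‖ ≤ R →
      ‖Ψ (w + h) - Ψ w‖ ≤ C * ‖h‖ * ((1 + ‖w‖) ^ N)⁻¹ := by
  obtain ⟨C₀, hderiv⟩ : ∃ C₀ : ℝ, ∀ v, (1 + ‖v‖) ^ N * ‖fderiv ℝ Ψ v‖ ≤ C₀ := by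
    have h := SchwartzMap.one_add_le_sup_seminorm_apply (𝕜 := ℝ) (m := (N, 1)) le_rfl le_rfl Ψ
    simp only [norm_iteratedFDeriv_one] at h
    exact ⟨_, h⟩
  have hC₀ : 0 ≤ C₀ := le_trans (by positivity) (hderiv 0)
  refine ⟨C₀ * (1 + R) ^ N, by positivity, fun w h hh => ?_⟩
  have hlocal : ∀ v ∈ closedBall w ‖h‖,
      ‖fderiv ℝ Ψ v‖ ≤ C₀ * (1 + R) ^ N * ((1 + ‖w‖) ^ N)⁻¹ := by
    intro v hv
    have hvw : 1 + ‖w‖ ≤ (1 + R) * (1 + ‖v‖) := by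
      have := (norm_sub_norm_le w v).trans
        ((norm_sub_rev w v).trans_le ((mem_closedBall_iff_norm.1 hv).trans hh))
      nlinarith [mul_nonneg hR (norm_nonneg v)]
    rw [← div_eq_mul_inv, le_div_iff₀ (by positivity)]
    calc ‖fderiv ℝ Ψ v‖ * (1 + ‖w‖) ^ N
        ≤ ‖fderiv ℝ Ψ v‖ * ((1 + R) * (1 + ‖v‖)) ^ N := by gcongr
      _ = (1 + ‖v‖) ^ N * ‖fderiv ℝ Ψ v‖ * (1 + R) ^ N := by
          rw [mul_pow]
          ring
      _ ≤ C₀ * (1 + R) ^ N := by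
          gcongr
          exact hderiv v
  have hmean := (convex_closedBall w ‖h‖).norm_image_sub_le_of_norm_fderiv_le (𝕜 := ℝ)
    (x := w) (y := w + h) (fun v _ => Ψ.differentiableAt) hlocal (by simp) (by simp)
  rwa [add_sub_cancel_left, mul_right_comm] at hmean

lemma integrable_mul_comp_sub {Ψ : Vd d → ℂ} (hΨ : Integrable Ψ) {g : Vd d → ℂ}
    (hg : Continuous g) {b : ℝ} (hb : ∀ x, ‖g x‖ ≤ b) (y : Vd d) :
    Integrable fun z => Ψ (y - z) * g z :=
  (hΨ.comp_sub_left y).mul_bdd hg.aestronglyMeasurable (.of_forall hb)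

/-- A pointwise form of Bernstein's inequality for band-limited functions. -/
lemma exists_enorm_sub_le_of_convolution_eq (Ψ : 𝓢(Vd d, ℂ)) {R : ℝ} (hR : 0 ≤ R) :
    ∃ C : ℝ≥0∞, C ≠ ∞ ∧ ∀ g : Vd d → ℂ, Continuous g → ∀ b : ℝ, (∀ x, ‖g x‖ ≤ b) →
      Ψ ⋆[ContinuousLinearMap.mul ℂ ℂ] g = g → ∀ x y, ‖y - x‖ ≤ R →
      ‖g y - g x‖ₑ ≤ C * ENNReal.ofReal ‖y - x‖ * HLMax (fun z => ‖g z‖ₑ) x := by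
  obtain ⟨C₁, hC₁, hkernel⟩ := exists_norm_schwartz_add_sub_le Ψ hR (d + 2)
  obtain ⟨C₂, hC₂, hmax⟩ := exists_lintegral_inv_one_add_norm_pow_mul_le d
  refine ⟨ENNReal.ofReal C₁ * C₂, ENNReal.mul_ne_top ofReal_ne_top hC₂,
    fun g hg b hb hrep x y hxy => ?_⟩
  have hint := integrable_mul_comp_sub Ψ.integrable hg hb
  have hdiff : g y - g x = ∫ z, (Ψ (y - z) - Ψ (x - z)) * g z := by
    simp only [sub_mul]
    rw [integral_sub (hint y) (hint x), ← convolution_mul_swap, ← convolution_mul_swap, hrep]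
  have hpoint (z : Vd d) : ‖(Ψ (y - z) - Ψ (x - z)) * g z‖ₑ ≤ ENNReal.ofReal (C₁ * ‖y - x‖) *
      (ENNReal.ofReal ((1 + ‖x - z‖) ^ (d + 2))⁻¹ * ‖g z‖ₑ) := by
    have h := hkernel (x - z) (y - x) hxy
    rw [sub_add_sub_comm, add_comm x, add_sub_add_right_eq_sub] at h
    rw [enorm_mul, ← mul_assoc, ← ENNReal.ofReal_mul (by positivity), ← ofReal_norm]
    gcongr
  calc ‖g y - g x‖ₑ ≤ ∫⁻ z, ‖(Ψ (y - z) - Ψ (x - z)) * g z‖ₑ := by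
        rw [hdiff]
        exact enorm_integral_le_lintegral_enorm _
    _ ≤ ENNReal.ofReal (C₁ * ‖y - x‖) *
          ∫⁻ z, ENNReal.ofReal ((1 + ‖x - z‖) ^ (d + 2))⁻¹ * ‖g z‖ₑ := by
        rw [← lintegral_const_mul' _ _ ofReal_ne_top]
        exact lintegral_mono hpoint
    _ ≤ ENNReal.ofReal C₁ * C₂ * ENNReal.ofReal ‖y - x‖ * HLMax (fun z => ‖g z‖ₑ) x := by
        rw [ENNReal.ofReal_mul hC₁, mul_right_comm _ C₂, mul_assoc _ C₂]
        gcongr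
        exact hmax _ hg.enorm.measurable.aemeasurable x

lemma exists_enorm_Ek_sub_le_of_convolution_eq {r q : ℝ} (hrq : r.HolderConjugate q)
    (Ψ : 𝓢(Vd d, ℂ)) :
    ∃ C : ℝ≥0∞, C ≠ ∞ ∧ ∀ g : Vd d → ℂ, Continuous g → ∀ b : ℝ, (∀ x, ‖g x‖ ≤ b) →
      Ψ ⋆[ContinuousLinearMap.mul ℂ ℂ] g = g → ∀ k : ℤ, 0 ≤ k → ∀ x,
      ‖Ek k g x - g x‖ₑ ≤ C * ENNReal.ofReal ((2 : ℝ) ^ (-k)) *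
        HLMax (fun z => ‖g z‖ₑ ^ r) x ^ (1 / r) := by
  obtain ⟨C, hC, hlip⟩ := exists_enorm_sub_le_of_convolution_eq Ψ (Real.sqrt_nonneg d)
  refine ⟨C * ENNReal.ofReal √d, ENNReal.mul_ne_top hC ofReal_ne_top,
    fun g hg b hb hrep k hk x => ?_⟩
  refine enorm_Ek_sub_le (integrableOn_of_isBounded hg.locallyIntegrable (isBounded_dyadCube k x))
    fun y hy => ?_
  have hdist := norm_sub_le_of_mem_dyadCube hy
  have hR : ‖y - x‖ ≤ √d := hdist.trans (mul_le_of_le_one_right (Real.sqrt_nonneg d)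
    (zpow_le_one_of_nonpos₀ one_le_two (by lia)))
  refine (hlip g hg b hb hrep x y hR).trans ?_
  rw [mul_assoc C (ENNReal.ofReal √d), ← ENNReal.ofReal_mul (Real.sqrt_nonneg d)]
  gcongr
  exact HLMax_le_rpow_HLMax_rpow hrq hg.enorm.measurable.aemeasurable x

lemma lintegral_enorm_schwartz_mul_one_add_norm_pow_ne_top (Ψ : 𝓢(Vd d, ℂ)) (N : ℕ) :
    ∫⁻ w, ‖Ψ w‖ₑ * ENNReal.ofReal ((1 + ‖w‖) ^ N) ≠ ∞ := by
  have hint : Integrable fun w : Vd d =>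
      2 ^ (N - 1) * (‖w‖ ^ 0 * ‖Ψ w‖ + ‖w‖ ^ N * ‖Ψ w‖) :=
    ((Ψ.integrable_pow_mul volume 0).add (Ψ.integrable_pow_mul volume N)).const_mul _
  refine ne_top_of_le_ne_top hint.lintegral_lt_top.ne (lintegral_mono fun w => ?_)
  rw [← ofReal_norm, ← ENNReal.ofReal_mul (norm_nonneg _)]
  refine ENNReal.ofReal_le_ofReal ?_
  calc ‖Ψ w‖ * (1 + ‖w‖) ^ N ≤ ‖Ψ w‖ * (2 ^ (N - 1) * (1 ^ N + ‖w‖ ^ N)) := by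
        gcongr
        exact add_pow_le zero_le_one (norm_nonneg w) N
    _ = 2 ^ (N - 1) * (‖w‖ ^ 0 * ‖Ψ w‖ + ‖w‖ ^ N * ‖Ψ w‖) := by
        rw [one_pow, pow_zero]
        ring

lemma Ek_eq_integral_mul_Ek_comp_sub_sub_Ek {Ψ : Vd d → ℂ} (hΨ : Integrable Ψ)
    (hΨ0 : ∫ w, Ψ w = 0) {g : Vd d → ℂ} (hg : Continuous g) {b : ℝ} (hb : ∀ x, ‖g x‖ ≤ b)
    (hrep : Ψ ⋆[ContinuousLinearMap.mul ℂ ℂ] g = g) (k : ℤ) (x : Vd d) :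
    Ek k g x = ∫ w, Ψ w * (Ek k (fun y => g (y - w)) x - Ek k g x) := by
  have : IsFiniteMeasure (volume.restrict (dyadCube k x)) :=
    ⟨by simpa using (volume_dyadCube_ne_top k x).lt_top⟩
  have hprod : Integrable (fun p : Vd d × Vd d => Ψ p.2 * g (p.1 - p.2))
      ((volume.restrict (dyadCube k x)).prod volume) :=
    (hΨ.comp_snd _).mul_bdd (by fun_prop) (.of_forall fun _ => hb _)
  have hswap : ∫ y in dyadCube k x, g y = ∫ w, Ψ w * ∫ y in dyadCube k x, g (y - w) := by
    calc ∫ y in dyadCube k x, g y = ∫ y in dyadCube k x, ∫ w, Ψ w * g (y - w) := by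
          congr with y
          exact (congrFun hrep y).symm
      _ = ∫ w, Ψ w * ∫ y in dyadCube k x, g (y - w) := by
          rw [integral_integral_swap hprod]
          simp only [integral_const_mul]
  have hEk : Integrable fun w => Ψ w * Ek k (fun y => g (y - w)) x := by
    simpa only [integral_const_mul, Ek, mul_smul_comm, Pi.smul_def] using
      hprod.integral_prod_right.smul ((2 : ℝ) ^ (k * (d : ℤ)))
  simp only [mul_sub]
  rw [integral_sub hEk (hΨ.mul_const _), integral_mul_const, hΨ0, zero_mul, sub_zero]
  simp only [Ek, mul_smul_comm]
  rw [integral_smul, hswap]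

lemma exists_enorm_Ek_le_of_convolution_eq {r q : ℝ} (hrq : r.HolderConjugate q)
    (Ψ : 𝓢(Vd d, ℂ)) (hΨ0 : ∫ w, Ψ w = 0) :
    ∃ C : ℝ≥0∞, C ≠ ∞ ∧ ∀ g : Vd d → ℂ, Continuous g → ∀ b : ℝ, (∀ x, ‖g x‖ ≤ b) →
      Ψ ⋆[ContinuousLinearMap.mul ℂ ℂ] g = g → ∀ k : ℤ, k ≤ 0 → ∀ x,
      ‖Ek k g x‖ₑ ≤ C * ENNReal.ofReal ((2 : ℝ) ^ k) ^ (1 / q) *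
        HLMax (fun z => ‖g z‖ₑ ^ r) x ^ (1 / r) := by
  obtain ⟨C, hC, hshift⟩ := exists_enorm_Ek_comp_sub_sub_Ek_le d hrq
  refine ⟨ENNReal.ofReal C * ∫⁻ w, ‖Ψ w‖ₑ * ENNReal.ofReal ((1 + ‖w‖) ^ (d + 1)),
    ENNReal.mul_ne_top ofReal_ne_top (lintegral_enorm_schwartz_mul_one_add_norm_pow_ne_top Ψ _),
    fun g hg b hb hrep k hk x => ?_⟩
  set M : ℝ≥0∞ := ENNReal.ofReal ((2 : ℝ) ^ k) ^ (1 / q) *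
    HLMax (fun z => ‖g z‖ₑ ^ r) x ^ (1 / r)
  calc ‖Ek k g x‖ₑ
      ≤ ∫⁻ w, ‖Ψ w * (Ek k (fun y => g (y - w)) x - Ek k g x)‖ₑ := by
        conv_lhs => rw [Ek_eq_integral_mul_Ek_comp_sub_sub_Ek Ψ.integrable hΨ0 hg hb hrep k x]
        exact enorm_integral_le_lintegral_enorm _
    _ ≤ ∫⁻ w, ENNReal.ofReal C * (‖Ψ w‖ₑ * ENNReal.ofReal ((1 + ‖w‖) ^ (d + 1))) * M := by
        gcongr with w
        calc ‖Ψ w * (Ek k (fun y => g (y - w)) x - Ek k g x)‖ₑ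
            ≤ ‖Ψ w‖ₑ * (ENNReal.ofReal (C * (1 + ‖w‖) ^ (d + 1)) * M) := by
              rw [enorm_mul]
              gcongr
              exact hshift k hk x w g hg.locallyIntegrable
          _ = _ := by
              rw [ENNReal.ofReal_mul hC]
              ring
    _ = _ := by
        rw [lintegral_mul_const _ (by fun_prop), lintegral_const_mul' _ _ ofReal_ne_top,
          mul_assoc _ (ENNReal.ofReal _ ^ _)]

end ReproducedFunctions

section DyadicDecay

/-- The weight `2 ^ (-|j| / q)`, which governs the martingale difference `E_{k+1} g - E_k g` of a
function `g` of frequency `2ⁿ` when `j = k - n`. -/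
def dyadicDecay (q : ℝ) (j : ℤ) : ℝ≥0∞ := ENNReal.ofReal ((2 : ℝ) ^ (-|(j : ℝ)| / q))

lemma ofReal_zpow_rpow_eq_dyadicDecay {q : ℝ} (hq : 0 ≤ q) {j : ℤ} (hj : j ≤ 0) :
    ENNReal.ofReal ((2 : ℝ) ^ j) ^ (1 / q) = dyadicDecay q j := by
  rw [dyadicDecay, ENNReal.ofReal_rpow_of_nonneg (by positivity) (by positivity),
    ← Real.rpow_intCast, ← Real.rpow_mul zero_le_two, abs_of_nonpos (by exact_mod_cast hj),
    neg_neg, mul_one_div]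

lemma ofReal_zpow_neg_le_dyadicDecay {q : ℝ} (hq : 1 ≤ q) {j : ℤ} (hj : 0 ≤ j) :
    ENNReal.ofReal ((2 : ℝ) ^ (-j)) ≤ dyadicDecay q j := by
  have hj' : (0 : ℝ) ≤ j := by exact_mod_cast hj
  rw [dyadicDecay, ← Real.rpow_intCast, abs_of_nonneg hj', Int.cast_neg, neg_div]
  gcongr
  · exact one_le_two
  · exact div_le_self hj' hq

lemma dyadicDecay_add_one_le {q : ℝ} (hq : 1 ≤ q) (j : ℤ) :
    dyadicDecay q (j + 1) ≤ 2 * dyadicDecay q j := by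
  have hexp : -|((j + 1 : ℤ) : ℝ)| / q ≤ 1 + -|(j : ℝ)| / q := by
    have hq0 : 0 < q := one_pos.trans_le hq
    have h : |(j : ℝ)| ≤ |(j : ℝ) + 1| + 1 := by simpa using abs_sub (j + 1 : ℝ) 1
    rw [div_le_iff₀ hq0, add_mul, div_mul_cancel₀ _ hq0.ne']
    push_cast
    linarith
  rw [dyadicDecay, dyadicDecay, ← ENNReal.ofReal_ofNat, ← ENNReal.ofReal_mul zero_le_two]
  refine ENNReal.ofReal_le_ofReal ?_
  calc (2 : ℝ) ^ (-|((j + 1 : ℤ) : ℝ)| / q) ≤ 2 ^ (1 + -|(j : ℝ)| / q) :=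
        Real.rpow_le_rpow_of_exponent_le one_le_two hexp
    _ = 2 * 2 ^ (-|(j : ℝ)| / q) := by rw [Real.rpow_add two_pos, Real.rpow_one]

lemma tsum_dyadicDecay_ne_top {q : ℝ} (hq : 0 < q) : ∑' j, dyadicDecay q j ≠ ∞ := by
  have hgeom : Summable fun n : ℕ => (2 : ℝ) ^ (-|(n : ℝ)| / q) := by
    have h : (2 : ℝ) ^ (-(1 / q)) < 1 :=
      Real.rpow_lt_one_of_one_lt_of_neg one_lt_two (by simpa using hq)
    refine (summable_geometric_of_lt_one (by positivity) h).congr fun n => ?_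
    rw [← Real.rpow_natCast, ← Real.rpow_mul zero_le_two, Nat.abs_cast, neg_mul, one_div_mul_eq_div,
      neg_div]
  have hint : Summable fun j : ℤ => (2 : ℝ) ^ (-|(j : ℝ)| / q) :=
    Summable.of_nat_of_neg (by simpa using hgeom) (by simpa using hgeom)
  exact hint.tsum_ofReal_ne_top

lemma exists_enorm_Ek_add_one_sub_Ek_le_of_convolution_eq {d : ℕ} {r q : ℝ}
    (hrq : r.HolderConjugate q) (Ψ : SchwartzMap (Vd d) ℂ) (hΨ0 : ∫ w, Ψ w = 0) :
    ∃ C : ℝ≥0∞, C ≠ ∞ ∧ ∀ g : Vd d → ℂ, Continuous g → ∀ b : ℝ, (∀ x, ‖g x‖ ≤ b) →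
      convolution Ψ g (ContinuousLinearMap.mul ℂ ℂ) volume = g → ∀ (k : ℤ) (x : Vd d),
      ‖Ek (k + 1) g x - Ek k g x‖ₑ ≤
        C * dyadicDecay q k * HLMax (fun z => ‖g z‖ₑ ^ r) x ^ (1 / r) := by
  obtain ⟨C₁, hC₁, hfine⟩ := exists_enorm_Ek_sub_le_of_convolution_eq hrq Ψ
  obtain ⟨C₂, hC₂, hcoarse⟩ := exists_enorm_Ek_le_of_convolution_eq hrq Ψ hΨ0
  have hq : 1 ≤ q := hrq.symm.lt.le
  refine ⟨3 * max C₁ C₂, by finiteness, fun g hg b hb hrep k x => ?_⟩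
  set M := HLMax (fun z => ‖g z‖ₑ ^ r) x ^ (1 / r)
  suffices ∃ c, ‖Ek (k + 1) g x - c‖ₑ ≤ max C₁ C₂ * dyadicDecay q (k + 1) * M ∧
      ‖Ek k g x - c‖ₑ ≤ max C₁ C₂ * dyadicDecay q k * M by
    obtain ⟨c, hsucc, hself⟩ := this
    calc ‖Ek (k + 1) g x - Ek k g x‖ₑ ≤ ‖Ek (k + 1) g x - c‖ₑ + ‖Ek k g x - c‖ₑ := by
          rw [← sub_sub_sub_cancel_right _ _ c]
          exact enorm_sub_le
      _ ≤ max C₁ C₂ * (2 * dyadicDecay q k) * M + max C₁ C₂ * dyadicDecay q k * M := by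
          refine add_le_add (hsucc.trans ?_) hself
          gcongr
          exact dyadicDecay_add_one_le hq k
      _ = 3 * max C₁ C₂ * dyadicDecay q k * M := by ring
  rcases lt_or_ge k 0 with hk | hk
  · have hbound (j : ℤ) (hj : j ≤ 0) : ‖Ek j g x - 0‖ₑ ≤ max C₁ C₂ * dyadicDecay q j * M := by
      rw [sub_zero, ← ofReal_zpow_rpow_eq_dyadicDecay hrq.symm.nonneg hj]
      refine (hcoarse g hg b hb hrep j hj x).trans ?_
      gcongr
      exact le_max_right _ _
    exact ⟨0, hbound _ hk, hbound _ hk.le⟩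
  · have hbound (j : ℤ) (hj : 0 ≤ j) : ‖Ek j g x - g x‖ₑ ≤ max C₁ C₂ * dyadicDecay q j * M := by
      refine (hfine g hg b hb hrep j hj x).trans ?_
      gcongr
      · exact le_max_left _ _
      · exact ofReal_zpow_neg_le_dyadicDecay hq hj
    exact ⟨g x, hbound _ (by lia), hbound _ hk⟩

end DyadicDecay

section Fourier

open scoped FourierTransform Convolution SchwartzMap

variable {d : ℕ}

lemma FT_eq_fourier (g : Vd d → ℂ) : FT g = 𝓕 g := by
  ext ξ
  simp [FT, Real.fourier_eq']

lemma FTinv_eq_fourierInv (g : Vd d → ℂ) : FTinv g = 𝓕⁻ g := by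
  ext x
  simp [FTinv, Real.fourierInv_eq']

lemma continuous_FT {a : Vd d → ℂ} (ha : Integrable a) : Continuous (FT a) := by
  rw [FT_eq_fourier]
  exact VectorFourier.fourierIntegral_continuous Real.continuous_fourierChar
    continuous_inner ha

lemma continuous_FTinv {a : Vd d → ℂ} (ha : Integrable a) : Continuous (FTinv a) := by
  rw [FTinv_eq_fourierInv]
  exact VectorFourier.fourierIntegral_continuous Real.continuous_fourierChar
    continuous_inner.neg ha

lemma norm_FT_le (a : Vd d → ℂ) (ξ : Vd d) : ‖FT a ξ‖ ≤ ∫ x, ‖a x‖ := by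
  rw [FT_eq_fourier]
  exact VectorFourier.norm_fourierIntegral_le_integral_norm _ _ _ _ _

lemma norm_FTinv_le (a : Vd d → ℂ) (x : Vd d) : ‖FTinv a x‖ ≤ ∫ ξ, ‖a ξ‖ := by
  rw [FTinv_eq_fourierInv]
  exact VectorFourier.norm_fourierIntegral_le_integral_norm _ _ _ _ _

lemma FTinv_comp_sub_left (U : Vd d → ℂ) (y ξ : Vd d) :
    FTinv (fun z => U (y - z)) ξ =
      Complex.exp ((2 * Real.pi * ⟪ξ, y⟫) * Complex.I) * FT U ξ := by
  rw [FTinv, FT, ← integral_sub_left_eq_self _ volume y, ← integral_const_mul]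
  congr with z
  rw [sub_sub_self, ← mul_assoc, ← Complex.exp_add, inner_sub_left, real_inner_comm y ξ]
  push_cast
  ring_nf

lemma integral_FTinv_mul_eq {a b : Vd d → ℂ} (ha : Integrable a) (hb : Integrable b) :
    ∫ z, FTinv a z * b z = ∫ ξ, a ξ * FTinv b ξ := by
  have hflip : (-innerₗ (Vd d)).flip = -innerₗ (Vd d) := by
    ext x y
    simp [real_inner_comm]
  have h := VectorFourier.integral_fourierIntegral_smul_eq_flip (L := -innerₗ (Vd d))
    Real.continuous_fourierChar continuous_inner.neg ha hb
  rw [hflip] at h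
  rw [FTinv_eq_fourierInv, FTinv_eq_fourierInv]
  exact h

lemma FTinv_convolution {a U : Vd d → ℂ} (ha : Integrable a) (hU : Integrable U) :
    FTinv a ⋆[ContinuousLinearMap.mul ℂ ℂ] U = FTinv fun ξ => a ξ * FT U ξ := by
  ext y
  calc ∫ z, FTinv a z * U (y - z)
      = ∫ ξ, a ξ * FTinv (fun z => U (y - z)) ξ := integral_FTinv_mul_eq ha (hU.comp_sub_left y)
    _ = ∫ ξ, Complex.exp ((2 * Real.pi * ⟪ξ, y⟫) * Complex.I) * (a ξ * FT U ξ) := by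
        simp only [FTinv_comp_sub_left, mul_left_comm]

lemma convolution_FTinv {a Ψ : Vd d → ℂ} (ha : Integrable a) (hΨ : Integrable Ψ) :
    Ψ ⋆[ContinuousLinearMap.mul ℂ ℂ] FTinv a = FTinv fun ξ => a ξ * FT Ψ ξ := by
  rw [← FTinv_convolution ha hΨ, ← convolution_flip, ContinuousLinearMap.flip_mul]

lemma FTinv_comp_smul (a : Vd d → ℂ) {s : ℝ} (hs : 0 < s) (y : Vd d) :
    FTinv (fun ξ => (s ^ d : ℝ) * a (s • ξ)) (s • y) = FTinv a y := by
  have h := Measure.integral_comp_smul volume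
    (fun ξ => Complex.exp ((2 * Real.pi * ⟪ξ, y⟫) * Complex.I) * a ξ) s
  rw [finrank_euclideanSpace_fin, abs_of_pos (by positivity), eq_inv_smul_iff₀ (by positivity),
    ← integral_smul] at h
  rw [FTinv, FTinv, ← h]
  congr with ξ
  rw [real_inner_smul_left, real_inner_smul_right, Complex.real_smul, mul_left_comm]

lemma exists_schwartz_FT_eq {v : Vd d → ℂ} (hv : ContDiff ℝ (⊤ : ℕ∞) v)
    (hvc : HasCompactSupport v) : ∃ Ψ : 𝓢(Vd d, ℂ), FT Ψ = v ∧ FTinv v = Ψ := by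
  refine ⟨𝓕⁻ (hvc.toSchwartzMap hv), ?_, ?_⟩
  · rw [FT_eq_fourier, ← SchwartzMap.fourier_coe, FourierTransform.fourier_fourierInv_eq]
    rfl
  · rw [FTinv_eq_fourierInv, SchwartzMap.fourierInv_coe]
    rfl

lemma integrable_FTinv_mul_FT {v : Vd d → ℂ} (hv : ContDiff ℝ (⊤ : ℕ∞) v)
    (hvc : HasCompactSupport v) {f : Vd d → ℂ} (hf : Integrable f) :
    Integrable (FTinv fun ξ => v ξ * FT f ξ) := by
  obtain ⟨Ψ, -, hΨ⟩ := exists_schwartz_FT_eq hv hvc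
  rw [← FTinv_convolution (hv.continuous.integrable_of_hasCompactSupport hvc) hf, hΨ]
  exact Ψ.integrable.integrable_convolution _ hf

lemma FT_FTinv_eq {u : Vd d → ℂ} (hu : Continuous u) (hui : Integrable u)
    (hFu : Integrable (FTinv u)) : FT (FTinv u) = u := by
  have hFu' : Integrable (𝓕 u) := by
    simpa only [FTinv_eq_fourierInv, Real.fourierInv_eq_fourier_neg, neg_neg] using hFu.comp_neg
  rw [FT_eq_fourier, FTinv_eq_fourierInv, hu.fourier_fourierInv_eq hui hFu']

lemma hasSum_FTinv {ι : Type*} [Countable ι] {a : ι → Vd d → ℂ} (ha : ∀ n, Integrable (a n))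
    (hs : Summable fun n => ∫ ξ, ‖a n ξ‖) {F : Vd d → ℂ}
    (hF : ∀ᵐ ξ, HasSum (fun n => a n ξ) (F ξ)) (y : Vd d) :
    HasSum (fun n => FTinv (a n) y) (FTinv F y) := by
  have hnorm (ξ : Vd d) (z : ℂ) :
      ‖Complex.exp ((2 * Real.pi * ⟪ξ, y⟫) * Complex.I) * z‖ = ‖z‖ := by
    have h := Complex.norm_exp_ofReal_mul_I (2 * Real.pi * ⟪ξ, y⟫)
    push_cast at h
    rw [norm_mul, h, one_mul]
  have h := hasSum_integral_of_summable_integral_norm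
    (F := fun n ξ => Complex.exp ((2 * Real.pi * ⟪ξ, y⟫) * Complex.I) * a n ξ)
    (fun n => (ha n).mono (by fun_prop) (.of_forall fun ξ => (hnorm ξ _).le))
    (by simpa only [hnorm] using hs)
  have hlim : (fun ξ => ∑' n, Complex.exp ((2 * Real.pi * ⟪ξ, y⟫) * Complex.I) * a n ξ) =ᵐ[volume]
      fun ξ => Complex.exp ((2 * Real.pi * ⟪ξ, y⟫) * Complex.I) * F ξ := by
    filter_upwards [hF] with ξ hξ
    rw [tsum_mul_left, hξ.tsum_eq]
  rwa [integral_congr_ae hlim] at h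

end Fourier

section UnitScale

variable {d : ℕ} {r q : ℝ}

lemma HLMax_rpow_rpow_le_mul_HLMax_rpow (hr : 0 < r) {A : ℝ≥0∞} (hA : A ≠ ∞)
    {G F : Vd d → ℝ≥0∞} (h : ∀ y, G y ≤ A * F y ^ (1 / r)) (x : Vd d) :
    HLMax (fun y => G y ^ r) x ^ (1 / r) ≤ A * HLMax F x ^ (1 / r) := by
  have hpow (y : Vd d) : G y ^ r ≤ A ^ r * F y := by
    rw [← ENNReal.le_rpow_inv_iff hr, ENNReal.mul_rpow_of_nonneg _ _ (by positivity),
      ENNReal.rpow_rpow_inv hr.ne', ← one_div]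
    exact h y
  rw [one_div, ENNReal.rpow_inv_le_iff hr, ENNReal.mul_rpow_of_nonneg _ _ hr.le,
    ENNReal.rpow_inv_rpow hr.ne']
  exact (HLMax_mono hpow x).trans
    (HLMax_const_mul_le (ENNReal.rpow_ne_top_of_nonneg hr.le hA) F x)

lemma exists_enorm_FTinv_mul_FT_le (d : ℕ) (hrq : r.HolderConjugate q) :
    ∃ C : ℝ≥0∞, C ≠ ∞ ∧ ∀ η0 : Vd d → ℝ, Measurable η0 → (∀ x : Vd d, ‖x‖ ≤ 1 / 2 → η0 x = 1) →
      Function.support η0 ⊆ closedBall 0 1 → ∀ a : Vd d → ℂ, Integrable a →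
      ∀ U : Vd d → ℂ, Integrable U → ∀ y, ‖FTinv (fun ξ => a ξ * FT U ξ) y‖ₑ ≤
        C * kernelNorm (etaFam η0) (ENNReal.ofReal q) (d / r) (FTinv a) *
          HLMax (fun z => ‖U z‖ₑ ^ r) y ^ (1 / r) := by
  obtain ⟨C, hC, hkernel⟩ := exists_lintegral_enorm_mul_le_kernelNorm d hrq
  refine ⟨C, hC, fun η0 hη0 hη01 hη0s a ha U hU y => ?_⟩
  calc ‖FTinv (fun ξ => a ξ * FT U ξ) y‖ₑ ≤ ∫⁻ z, ‖FTinv a z * U (y - z)‖ₑ := by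
        rw [← FTinv_convolution ha hU]
        exact enorm_integral_le_lintegral_enorm _
    _ = ∫⁻ z, ‖FTinv a z‖ₑ * ‖U (y - z)‖ₑ := by simp only [enorm_mul]
    _ ≤ _ := hkernel η0 hη0 hη01 hη0s _ (continuous_FTinv ha).measurable.aemeasurable _
        hU.aestronglyMeasurable.enorm y

lemma exists_enorm_Ek_add_one_sub_Ek_FTinv_le (hrq : r.HolderConjugate q) {v : Vd d → ℂ}
    (hv : ContDiff ℝ (⊤ : ℕ∞) v) (hvc : HasCompactSupport v) (hv0 : v 0 = 0) :
    ∃ C : ℝ≥0∞, C ≠ ∞ ∧ ∀ b : Vd d → ℂ, Integrable b → (∀ ξ, b ξ * v ξ = b ξ) →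
      ∀ (k : ℤ) (x : Vd d), ‖Ek (k + 1) (FTinv b) x - Ek k (FTinv b) x‖ₑ ≤
        C * dyadicDecay q k * HLMax (fun z => ‖FTinv b z‖ₑ ^ r) x ^ (1 / r) := by
  obtain ⟨Ψ, hΨ, -⟩ := exists_schwartz_FT_eq hv hvc
  have hΨ0 : ∫ w, Ψ w = 0 := by simpa [FT, hv0] using congrFun hΨ 0
  obtain ⟨C, hC, hdecay⟩ := exists_enorm_Ek_add_one_sub_Ek_le_of_convolution_eq hrq Ψ hΨ0
  refine ⟨C, hC, fun b hb hbv => hdecay _ (continuous_FTinv hb) _ (norm_FTinv_le b) ?_⟩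
  rw [convolution_FTinv hb Ψ.integrable, hΨ]
  simp only [hbv]

lemma exists_enorm_Ek_add_one_sub_Ek_FTinv_mul_FT_le (hrq : r.HolderConjugate q) {v : Vd d → ℂ}
    (hv : ContDiff ℝ (⊤ : ℕ∞) v) (hvc : HasCompactSupport v) (hv0 : v 0 = 0) :
    ∃ C : ℝ≥0∞, C ≠ ∞ ∧ ∀ η0 : Vd d → ℝ, Measurable η0 → (∀ x : Vd d, ‖x‖ ≤ 1 / 2 → η0 x = 1) →
      Function.support η0 ⊆ closedBall 0 1 → ∀ a : Vd d → ℂ, Integrable a →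
      (∀ ξ, a ξ * v ξ = a ξ) → ∀ N : ℝ≥0∞, N ≠ ∞ →
      kernelNorm (etaFam η0) (ENNReal.ofReal q) (d / r) (FTinv a) ≤ N →
      ∀ U : Vd d → ℂ, Integrable U → ∀ (k : ℤ) (x : Vd d),
      ‖Ek (k + 1) (FTinv fun ξ => a ξ * FT U ξ) x - Ek k (FTinv fun ξ => a ξ * FT U ξ) x‖ₑ ≤
        C * N * (dyadicDecay q k * HLMax (HLMax (HLMax fun z => ‖U z‖ₑ ^ r)) x ^ (1 / r)) := by
  obtain ⟨C₁, hC₁, hpoint⟩ := exists_enorm_FTinv_mul_FT_le d hrq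
  obtain ⟨C₂, hC₂, hdecay⟩ := exists_enorm_Ek_add_one_sub_Ek_FTinv_le hrq hv hvc hv0
  have hr : 0 ≤ 1 / r := hrq.one_div_nonneg
  refine ⟨C₂ * C₁ * (2 ^ d) ^ (1 / r), by finiteness,
    fun η0 hη0 hη01 hη0s a ha hav N hN haN U hU k x => ?_⟩
  have hint : Integrable fun ξ => a ξ * FT U ξ :=
    ha.mul_bdd (continuous_FT hU).aestronglyMeasurable (.of_forall (norm_FT_le U))
  have hbound (y : Vd d) : ‖FTinv (fun ξ => a ξ * FT U ξ) y‖ₑ ≤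
      C₁ * N * HLMax (fun z => ‖U z‖ₑ ^ r) y ^ (1 / r) := by
    refine (hpoint η0 hη0 hη01 hη0s a ha U hU y).trans ?_
    gcongr
  calc ‖Ek (k + 1) (FTinv fun ξ => a ξ * FT U ξ) x - Ek k (FTinv fun ξ => a ξ * FT U ξ) x‖ₑ
      ≤ C₂ * dyadicDecay q k *
          HLMax (fun z => ‖FTinv (fun ξ => a ξ * FT U ξ) z‖ₑ ^ r) x ^ (1 / r) :=
        hdecay _ hint (fun ξ => by rw [mul_right_comm, hav]) k x
    _ ≤ C₂ * dyadicDecay q k * (C₁ * N *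
          (2 ^ d * HLMax (HLMax (HLMax fun z => ‖U z‖ₑ ^ r)) x) ^ (1 / r)) := by
        gcongr
        refine (HLMax_rpow_rpow_le_mul_HLMax_rpow hrq.pos (by finiteness) hbound x).trans ?_
        gcongr
        exact HLMax_le_two_pow_mul_HLMax_HLMax _ x
    _ = _ := by
        rw [ENNReal.mul_rpow_of_nonneg _ _ hr]
        ring

end UnitScale

section LittlewoodPaley

variable {d : ℕ}

/-- The Littlewood–Paley piece `F⁻¹[χ(2⁻ⁿ·) h]` at frequency `2ⁿ` of the function with Fourier
transform `h`. For `χ = φ`, `h = m f^` it is a piece of `T f`; for `χ = ψ`, `h = f^` it is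
`L_n f`. -/
def littlewoodPaleyPiece (χ : Vd d → ℝ) (h : Vd d → ℂ) (n : ℤ) : Vd d → ℂ :=
  FTinv fun ξ => (χ ((2 : ℝ) ^ (-n) • ξ) : ℂ) * h ξ

lemma integrable_littlewoodPaleyPiece_FT {χ : Vd d → ℝ} (hχ : ContDiff ℝ (⊤ : ℕ∞) χ)
    (hχc : HasCompactSupport χ) {f : Vd d → ℂ} (hf : Integrable f) (n : ℤ) :
    Integrable (littlewoodPaleyPiece χ (FT f) n) := by
  have hs : (2 : ℝ) ^ (-n) ≠ 0 := by positivity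
  have hsmooth : ContDiff ℝ (⊤ : ℕ∞) fun ξ => (χ ((2 : ℝ) ^ (-n) • ξ) : ℂ) :=
    Complex.ofRealCLM.contDiff.comp (hχ.comp (contDiff_const_smul _))
  have hsupp : HasCompactSupport fun ξ => (χ ((2 : ℝ) ^ (-n) • ξ) : ℂ) :=
    (hχc.comp_smul hs).comp_left Complex.ofReal_zero
  exact integrable_FTinv_mul_FT hsmooth hsupp hf

lemma littlewoodPaleyPiece_eq_FTinv_comp_smul (χ : Vd d → ℝ) (h : Vd d → ℂ) (n : ℤ) :
    littlewoodPaleyPiece χ h n = fun y =>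
      FTinv (fun ξ => (χ ξ : ℂ) * ((((2 : ℝ) ^ n) ^ d : ℝ) * h ((2 : ℝ) ^ n • ξ)))
        ((2 : ℝ) ^ n • y) := by
  have hcancel (ξ : Vd d) : (2 : ℝ) ^ (-n) • (2 : ℝ) ^ n • ξ = ξ := by
    rw [zpow_neg, inv_smul_smul₀ (by positivity)]
  ext y
  rw [littlewoodPaleyPiece, ← FTinv_comp_smul _ (zpow_pos two_pos n)]
  simp only [hcancel, mul_left_comm]

lemma exists_enorm_Ek_add_one_sub_Ek_littlewoodPaleyPiece_le {r q : ℝ}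
    (hrq : r.HolderConjugate q) {φ ψ : Vd d → ℝ} (hφ : Continuous φ) (hφc : HasCompactSupport φ)
    (hψ : ContDiff ℝ (⊤ : ℕ∞) ψ) (hψc : HasCompactSupport ψ) (hψ0 : ψ 0 = 0)
    (hψ1 : ∀ ξ ∈ Function.support φ, ψ ξ = 1) :
    ∃ C : ℝ≥0∞, C ≠ ∞ ∧ ∀ η0 : Vd d → ℝ, Measurable η0 → (∀ x : Vd d, ‖x‖ ≤ 1 / 2 → η0 x = 1) →
      Function.support η0 ⊆ closedBall 0 1 → ∀ m : Vd d → ℂ, Measurable m →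
      ∀ b : ℝ, (∀ ξ, ‖m ξ‖ ≤ b) → ∀ N : ℝ≥0∞, N ≠ ∞ →
      Ynorm φ (etaFam η0) (ENNReal.ofReal q) (d / r) m ≤ N →
      ∀ h : Vd d → ℂ, Continuous h → ∀ n, Integrable (littlewoodPaleyPiece ψ h n) →
      ∀ (k : ℤ) (x : Vd d),
      ‖Ek (k + 1) (littlewoodPaleyPiece φ (fun ξ => m ξ * h ξ) n) x -
          Ek k (littlewoodPaleyPiece φ (fun ξ => m ξ * h ξ) n) x‖ₑ ≤
        C * N * (dyadicDecay q (k - n) *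
          HLMax (HLMax (HLMax fun y => ‖littlewoodPaleyPiece ψ h n y‖ₑ ^ r)) x ^ (1 / r)) := by
  have hψ_smooth : ContDiff ℝ (⊤ : ℕ∞) fun ξ => (ψ ξ : ℂ) := Complex.ofRealCLM.contDiff.comp hψ
  have hψ_supp : HasCompactSupport fun ξ => (ψ ξ : ℂ) := hψc.comp_left Complex.ofReal_zero
  obtain ⟨C, hC, hunit⟩ := exists_enorm_Ek_add_one_sub_Ek_FTinv_mul_FT_le hrq hψ_smooth hψ_supp
    (by rw [hψ0, Complex.ofReal_zero])
  refine ⟨C, hC, fun η0 hη0 hη01 hη0s m hm b hb N hN hY h hh n hL k x => ?_⟩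
  have hs : (0 : ℝ) < 2 ^ n := by positivity
  set s : ℝ := 2 ^ n
  let a : Vd d → ℂ := fun ξ => φ ξ * m (s • ξ)
  let u : Vd d → ℂ := fun ξ => ψ ξ * ((s ^ d : ℝ) * h (s • ξ))
  have ha : Integrable a :=
    ((Complex.continuous_ofReal.comp hφ).integrable_of_hasCompactSupport
      (hφc.comp_left Complex.ofReal_zero)).mul_bdd
      (hm.comp (measurable_const_smul s)).aestronglyMeasurable (.of_forall fun ξ => hb _)
  have haψ (ξ : Vd d) : a ξ * ψ ξ = a ξ := by
    by_cases hξ : φ ξ = 0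
    · simp [a, hξ]
    · rw [hψ1 ξ hξ, Complex.ofReal_one, mul_one]
  have hLu : littlewoodPaleyPiece ψ h n = fun y => FTinv u (s • y) :=
    littlewoodPaleyPiece_eq_FTinv_comp_smul ψ h n
  have hFu : Integrable (FTinv u) := by
    rwa [hLu, integrable_comp_smul_iff _ _ hs.ne'] at hL
  have hu : Continuous u := by fun_prop
  have hFTu : FT (FTinv u) = u :=
    FT_FTinv_eq hu (hu.integrable_of_hasCompactSupport hψ_supp.mul_right) hFu
  have hTa : littlewoodPaleyPiece φ (fun ξ => m ξ * h ξ) n =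
      fun y => FTinv (fun ξ => a ξ * FT (FTinv u) ξ) (s • y) := by
    have hau (ξ : Vd d) : a ξ * FT (FTinv u) ξ = φ ξ * ((s ^ d : ℝ) * (m (s • ξ) * h (s • ξ))) := by
      rw [hFTu, ← mul_assoc, haψ]
      ring
    simp only [hau]
    exact littlewoodPaleyPiece_eq_FTinv_comp_smul φ _ n
  rw [hTa, hLu, Ek_comp_zpow_smul, Ek_comp_zpow_smul, add_sub_right_comm,
    HLMax_comp_smul (fun y => ‖FTinv u y‖ₑ ^ r) hs, HLMax_comp_smul _ hs, HLMax_comp_smul _ hs]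
  exact hunit η0 hη0 hη01 hη0s a ha haψ N hN ((kernelNorm_le_Ynorm φ _ _ _ m n).trans hY) _ hFu _ _

lemma tsum_enorm_comp_zpow_smul_le {φ : Vd d → ℝ}
    (hφs : Function.support φ ⊆ {ξ : Vd d | 1 / 2 < ‖ξ‖ ∧ ‖ξ‖ < 2}) {P : ℝ≥0∞}
    (hP : ∀ ξ, ‖φ ξ‖ₑ ≤ P) {ξ : Vd d} (hξ : ξ ≠ 0) :
    ∑' n : ℤ, ‖φ ((2 : ℝ) ^ (-n) • ξ)‖ₑ ≤ 2 * P := by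
  set N := Int.log 2 ‖ξ‖
  have hN : (2 : ℝ) ^ N ≤ ‖ξ‖ := by
    exact_mod_cast Int.zpow_log_le_self one_lt_two (norm_pos_iff.2 hξ)
  have hN' : ‖ξ‖ < (2 : ℝ) ^ (N + 1) := by
    exact_mod_cast Int.lt_zpow_succ_log_self one_lt_two ‖ξ‖
  have hsupp : ∀ n ∉ ({N, N + 1} : Finset ℤ), ‖φ ((2 : ℝ) ^ (-n) • ξ)‖ₑ = 0 := by
    intro n hn
    by_contra hne
    have h := hφs (enorm_ne_zero.1 hne)
    have hpos : (0 : ℝ) < 2 ^ n := by positivity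
    rw [Set.mem_ofPred_eq, norm_smul, zpow_neg, norm_inv, Real.norm_of_nonneg hpos.le,
      lt_inv_mul_iff₀ hpos, inv_mul_lt_iff₀ hpos, mul_one_div, div_eq_mul_inv,
      ← zpow_sub_one₀ (two_ne_zero' ℝ), ← zpow_add_one₀ (two_ne_zero' ℝ)] at h
    have hNn : N < n + 1 := (zpow_lt_zpow_iff_right₀ _root_.one_lt_two).1 (hN.trans_lt h.2)
    have hnN : n - 1 < N + 1 := (zpow_lt_zpow_iff_right₀ _root_.one_lt_two).1 (h.1.trans hN')
    simp only [Finset.mem_insert, Finset.mem_singleton] at hn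
    lia
  calc ∑' n : ℤ, ‖φ ((2 : ℝ) ^ (-n) • ξ)‖ₑ
      = ∑ n ∈ {N, N + 1}, ‖φ ((2 : ℝ) ^ (-n) • ξ)‖ₑ := tsum_eq_sum hsupp
    _ ≤ Finset.card {N, N + 1} • P := Finset.sum_le_card_nsmul _ _ _ fun n _ => hP _
    _ = 2 * P := by simp

lemma summable_integral_norm_comp_zpow_smul_mul [NeZero d] {φ : Vd d → ℝ} (hφ : Continuous φ)
    (hφs : Function.support φ ⊆ {ξ : Vd d | 1 / 2 < ‖ξ‖ ∧ ‖ξ‖ < 2}) {P : ℝ}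
    (hP : ∀ ξ, ‖φ ξ‖ ≤ P) {F : Vd d → ℂ} (hF : Integrable F) :
    Summable fun n : ℤ => ∫ ξ, ‖(φ ((2 : ℝ) ^ (-n) • ξ) : ℂ) * F ξ‖ := by
  have hPe (ξ : Vd d) : ‖φ ξ‖ₑ ≤ ENNReal.ofReal P := by
    rw [← ofReal_norm]
    exact ENNReal.ofReal_le_ofReal (hP ξ)
  have hmeas (n : ℤ) : AEMeasurable fun ξ => ‖(φ ((2 : ℝ) ^ (-n) • ξ) : ℂ) * F ξ‖ₑ :=
    (Continuous.aemeasurable (by fun_prop)).mul hF.aemeasurable |>.enorm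
  have hpoint : ∀ᵐ ξ, ∑' n : ℤ, ‖(φ ((2 : ℝ) ^ (-n) • ξ) : ℂ) * F ξ‖ₑ ≤
      2 * ENNReal.ofReal P * ‖F ξ‖ₑ := by
    filter_upwards [Measure.ae_ne volume 0] with ξ hξ
    have henorm (n : ℤ) : ‖(φ ((2 : ℝ) ^ (-n) • ξ) : ℂ) * F ξ‖ₑ =
        ‖φ ((2 : ℝ) ^ (-n) • ξ)‖ₑ * ‖F ξ‖ₑ := by
      rw [enorm_mul, ← ofReal_norm, Complex.norm_real, ofReal_norm]
    rw [tsum_congr henorm, ENNReal.tsum_mul_right]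
    gcongr
    exact tsum_enorm_comp_zpow_smul_le hφs hPe hξ
  have hfin : ∑' n : ℤ, ∫⁻ ξ, ‖(φ ((2 : ℝ) ^ (-n) • ξ) : ℂ) * F ξ‖ₑ ≠ ∞ := by
    rw [← lintegral_tsum hmeas]
    refine ne_top_of_le_ne_top ?_ (lintegral_mono_ae hpoint)
    rw [lintegral_const_mul' _ _ (by finiteness)]
    exact ENNReal.mul_ne_top (by finiteness) hF.2.ne
  refine (ENNReal.summable_toReal hfin).congr fun n => ?_
  rw [integral_norm_eq_lintegral_enorm]
  exact (Continuous.aestronglyMeasurable (by fun_prop)).mul hF.aestronglyMeasurable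

lemma hasSum_Ek {ι : Type*} [Countable ι] {g : ι → Vd d → ℂ} (hg : ∀ n, Continuous (g n))
    {b : ι → ℝ} (hb : ∀ n y, ‖g n y‖ ≤ b n) (hs : Summable b) {G : Vd d → ℂ}
    (hG : ∀ y, HasSum (fun n => g n y) (G y)) (k : ℤ) (x : Vd d) :
    HasSum (fun n => Ek k (g n) x) (Ek k G x) := by
  have hint (n : ι) : IntegrableOn (g n) (dyadCube k x) :=
    integrableOn_of_isBounded (hg n).locallyIntegrable (isBounded_dyadCube k x)
  have hsum : Summable fun n => ∫ y in dyadCube k x, ‖g n y‖ := by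
    refine Summable.of_nonneg_of_le (fun n => integral_nonneg fun _ => norm_nonneg _) (fun n => ?_)
      (hs.mul_left (volume.real (dyadCube k x)))
    calc ∫ y in dyadCube k x, ‖g n y‖ ≤ ∫ _ in dyadCube k x, b n :=
          integral_mono (hint n).norm (integrableOn_const (volume_dyadCube_ne_top k x)) (hb n)
      _ = volume.real (dyadCube k x) * b n := by rw [setIntegral_const, smul_eq_mul]
  have h := hasSum_integral_of_summable_integral_norm hint hsum
  simp only [(hG _).tsum_eq] at h
  exact h.const_smul _

lemma hasSum_Ek_littlewoodPaleyPiece [NeZero d] {φ : Vd d → ℝ} (hφ : Continuous φ)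
    (hφc : HasCompactSupport φ)
    (hφs : Function.support φ ⊆ {ξ : Vd d | 1 / 2 < ‖ξ‖ ∧ ‖ξ‖ < 2})
    (hφ1 : ∀ ξ : Vd d, ξ ≠ 0 → HasSum (fun k : ℤ => φ ((2 : ℝ) ^ (-k) • ξ)) 1)
    {F : Vd d → ℂ} (hF : Integrable F) (k : ℤ) (x : Vd d) :
    HasSum (fun n => Ek k (littlewoodPaleyPiece φ F n) x) (Ek k (FTinv F) x) := by
  obtain ⟨P, hP⟩ := hφ.bounded_above_of_compact_support hφc
  have hint (n : ℤ) : Integrable fun ξ => (φ ((2 : ℝ) ^ (-n) • ξ) : ℂ) * F ξ :=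
    hF.bdd_mul (Continuous.aestronglyMeasurable (by fun_prop))
      (.of_forall fun ξ => (Complex.norm_real _).trans_le (hP _))
  have hsum := summable_integral_norm_comp_zpow_smul_mul hφ hφs hP hF
  have hlim : ∀ᵐ ξ, HasSum (fun n : ℤ => (φ ((2 : ℝ) ^ (-n) • ξ) : ℂ) * F ξ) (F ξ) := by
    filter_upwards [Measure.ae_ne volume 0] with ξ hξ
    simpa using (Complex.hasSum_ofReal.2 (hφ1 ξ hξ)).mul_right (F ξ)
  exact hasSum_Ek (fun n => continuous_FTinv (hint n)) (fun n => norm_FTinv_le _) hsum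
    (hasSum_FTinv hint hsum hlim) k x

lemma enorm_Ek_add_one_sub_Ek_FTinv_le_tsum [NeZero d] {φ : Vd d → ℝ} (hφ : Continuous φ)
    (hφc : HasCompactSupport φ)
    (hφs : Function.support φ ⊆ {ξ : Vd d | 1 / 2 < ‖ξ‖ ∧ ‖ξ‖ < 2})
    (hφ1 : ∀ ξ : Vd d, ξ ≠ 0 → HasSum (fun k : ℤ => φ ((2 : ℝ) ^ (-k) • ξ)) 1)
    {F : Vd d → ℂ} (hF : Integrable F) (k : ℤ) (x : Vd d) :
    ‖Ek (k + 1) (FTinv F) x - Ek k (FTinv F) x‖ₑ ≤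
      ∑' n, ‖Ek (k + 1) (littlewoodPaleyPiece φ F n) x -
        Ek k (littlewoodPaleyPiece φ F n) x‖ₑ := by
  have h := (hasSum_Ek_littlewoodPaleyPiece hφ hφc hφs hφ1 hF (k + 1) x).sub
    (hasSum_Ek_littlewoodPaleyPiece hφ hφc hφs hφ1 hF k x)
  rw [← h.tsum_eq]
  exact enorm_tsum_le_tsum_enorm

end LittlewoodPaley

section SquareFunction

lemma sqFun_of_dim_zero (g : Vd 0 → ℂ) (x : Vd 0) : sqFun g x = 0 := by
  have hcube (k : ℤ) : dyadCube k x = Set.univ := by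
    ext y
    simp [dyadCube]
  simp [sqFun, Ek, hcube]

lemma sqFun_le_of_enorm_le_tsum {d : ℕ} {g : Vd d → ℂ} {x : Vd d} {c : ℝ≥0∞}
    {w a : ℤ → ℝ≥0∞}
    (h : ∀ k : ℤ, ‖Ek (k + 1) g x - Ek k g x‖ₑ ≤ c * ∑' n, w (k - n) * a n) :
    sqFun g x ≤ c * (∑' j, w j) * (∑' n, a n ^ 2) ^ (1 / 2 : ℝ) := by
  have hsum : ∑' k : ℕ, ‖Ek ((k : ℤ) + 1) g x - Ek (k : ℤ) g x‖ₑ ^ 2 ≤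
      (c * ∑' j, w j) ^ 2 * ∑' n, a n ^ 2 :=
    calc ∑' k : ℕ, ‖Ek ((k : ℤ) + 1) g x - Ek (k : ℤ) g x‖ₑ ^ 2
        ≤ ∑' k : ℤ, ‖Ek (k + 1) g x - Ek k g x‖ₑ ^ 2 :=
          ENNReal.tsum_comp_le_tsum_of_injective Nat.cast_injective _
      _ ≤ ∑' k : ℤ, c ^ 2 * (∑' n, w (k - n) * a n) ^ 2 := by
          gcongr with k
          rw [← mul_pow]
          gcongr
          exact h k
      _ ≤ c ^ 2 * ((∑' j, w j) ^ 2 * ∑' n, a n ^ 2) := by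
          rw [ENNReal.tsum_mul_left]
          gcongr
          exact tsum_sq_tsum_sub_mul_le w a
      _ = (c * ∑' j, w j) ^ 2 * ∑' n, a n ^ 2 := by ring
  calc sqFun g x ≤ ((c * ∑' j, w j) ^ 2 * ∑' n, a n ^ 2) ^ (1 / 2 : ℝ) := by
        rw [sqFun]
        gcongr
        exact hsum
    _ = c * (∑' j, w j) * (∑' n, a n ^ 2) ^ (1 / 2 : ℝ) := by
        rw [ENNReal.mul_rpow_of_nonneg _ _ (by positivity), ← ENNReal.rpow_two,
          ← ENNReal.rpow_mul, mul_one_div_cancel two_ne_zero, ENNReal.rpow_one]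

end SquareFunction

theorem stmt_14_general {d : ℕ} {r : ℝ} (hr : 1 < r)
    {φ : Vd d → ℝ} (hφ : Continuous φ)
    (hφs : Function.support φ ⊆ {ξ : Vd d | 1 / 2 < ‖ξ‖ ∧ ‖ξ‖ < 2})
    (hφ1 : ∀ ξ : Vd d, ξ ≠ 0 → HasSum (fun k : ℤ => φ ((2 : ℝ) ^ (-k) • ξ)) 1)
    {η0 : Vd d → ℝ} (hη0 : Measurable η0) (hη01 : ∀ x : Vd d, ‖x‖ ≤ 1 / 2 → η0 x = 1)
    (hη0s : Function.support η0 ⊆ closedBall 0 1)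
    {ψ : Vd d → ℝ} (hψ : ContDiff ℝ (⊤ : ℕ∞) ψ) (hψc : HasCompactSupport ψ)
    (hψ0 : ψ 0 = 0) (hψ1 : ∀ ξ ∈ Function.support φ, ψ ξ = 1) :
    ∃ A : ℝ, 0 < A ∧
      ∀ (m : Vd d → ℂ) (B : ℝ), Measurable m → (∃ Bm : ℝ, ∀ ξ, ‖m ξ‖ ≤ Bm) →
        Ynorm φ (etaFam η0) (ENNReal.ofReal (r / (r - 1))) (d / r) m ≤ ENNReal.ofReal B →
        ∀ f : Vd d → ℂ, Integrable f → Integrable (FT f) → ∀ x : Vd d,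
          sqFun (FTinv fun ξ => m ξ * FT f ξ) x ≤ ENNReal.ofReal (A * B) *
            (∑' k : ℤ, HLMax (HLMax (HLMax fun y =>
              ‖FTinv (fun ξ => (ψ ((2 : ℝ) ^ (-k) • ξ) : ℂ) * FT f ξ) y‖ₑ ^ r)) x ^ (2 / r)) ^
                (1 / 2 : ℝ) := by
  obtain rfl | hd := eq_zero_or_neZero d
  · exact ⟨1, one_pos, fun m B _ _ _ f _ _ x => by simp [sqFun_of_dim_zero]⟩
  have hrq : r.HolderConjugate (r / (r - 1)) := Real.HolderConjugate.conjExponent hr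
  have hφc : HasCompactSupport φ := HasCompactSupport.intro (isCompact_closedBall 0 2)
    fun ξ hξ => by_contra fun hne => hξ (mem_closedBall_zero_iff.2 (hφs hne).2.le)
  obtain ⟨C, hC, hpiece⟩ :=
    exists_enorm_Ek_add_one_sub_Ek_littlewoodPaleyPiece_le hrq hφ hφc hψ hψc hψ0 hψ1
  have hW : ∑' j, dyadicDecay (r / (r - 1)) j ≠ ∞ := tsum_dyadicDecay_ne_top hrq.symm.pos
  set W := ∑' j, dyadicDecay (r / (r - 1)) j
  refine ⟨(C * W).toReal + 1, by positivity, fun m B hm ⟨b, hb⟩ hY f hf hFf x => ?_⟩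
  have hF : Integrable fun ξ => m ξ * FT f ξ :=
    hFf.bdd_mul hm.aestronglyMeasurable (.of_forall hb)
  have hD (k : ℤ) := (enorm_Ek_add_one_sub_Ek_FTinv_le_tsum hφ hφc hφs hφ1 hF k x).trans <|
    (ENNReal.tsum_le_tsum fun n => hpiece η0 hη0 hη01 hη0s m hm b hb _ ofReal_ne_top hY (FT f)
      (continuous_FT hf) n (integrable_littlewoodPaleyPiece_FT hψ hψc hf n) k x).trans_eq
      ENNReal.tsum_mul_left
  refine (sqFun_le_of_enorm_le_tsum hD).trans ?_
  have hCW : C * ENNReal.ofReal B * W ≤ ENNReal.ofReal (((C * W).toReal + 1) * B) := by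
    rw [ENNReal.ofReal_mul (by positivity), mul_right_comm]
    gcongr
    exact (ENNReal.ofReal_toReal (ENNReal.mul_ne_top hC hW)).ge.trans
      (ENNReal.ofReal_le_ofReal (lt_add_one _).le)
  have hrpow (t : ℝ≥0∞) : (t ^ (1 / r)) ^ 2 = t ^ (2 / r) := by
    rw [← ENNReal.rpow_two, ← ENNReal.rpow_mul, one_div_mul_eq_div]
  simp only [hrpow]
  gcongr
  rfl

/-- Lemma 3.1 (key pointwise square-function bound).  If `‖m‖_{Y(r',d/r)} ≤ B` then,
with `Tf = F^{-1}[m f^]`, `L_k f = F^{-1}[ψ(2^{-k}·) f^]`, `M = M∘M∘M` the threefold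
Hardy–Littlewood maximal operator and
`G_r(f) = (∑_k (M[|L_k f|^r])^{2/r})^{1/2}`, one has
`S(Tf)(x) ≤ A_r B G_r(f)(x)` pointwise a.e. -/
theorem stmt_14 {d : ℕ} (r : ℝ) (hr1 : 1 < r) (hr2 : r < 2)
    (φ : Vd d → ℝ) (hφ : ContDiff ℝ (⊤ : ℕ∞) φ)
    (hφs : Function.support φ ⊆ {ξ : Vd d | 1/2 < ‖ξ‖ ∧ ‖ξ‖ < 2})
    (hφ1 : ∀ ξ : Vd d, ξ ≠ 0 → HasSum (fun k : ℤ => φ ((2:ℝ) ^ (-k) • ξ)) 1)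
    (η0 : Vd d → ℝ) (hη0 : ContDiff ℝ (⊤ : ℕ∞) η0) (hη0c : HasCompactSupport η0)
    (hη0e : ∀ x, η0 (-x) = η0 x) (hη01 : ∀ x : Vd d, ‖x‖ ≤ 1/2 → η0 x = 1)
    (hη0s : Function.support η0 ⊆ closedBall 0 1)
    (ψ : Vd d → ℝ) (hψ : ContDiff ℝ (⊤ : ℕ∞) ψ) (hψc : HasCompactSupport ψ)
    (hψ0 : (0 : Vd d) ∉ tsupport ψ)
    (hψ1 : ∀ ξ ∈ tsupport φ, ψ ξ = 1) :
    ∃ A : ℝ, 0 < A ∧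
      ∀ (m : Vd d → ℂ) (B : ℝ), Measurable m → (∃ Bm : ℝ, ∀ ξ, ‖m ξ‖ ≤ Bm) →
        Ynorm φ (etaFam η0) (ENNReal.ofReal (r / (r - 1))) ((d : ℝ) / r) m ≤
          ENNReal.ofReal B →
        ∀ f : SchwartzMap (Vd d) ℂ,
          ∀ᵐ x : Vd d,
            sqFun (FTinv (fun ξ => m ξ * FT (f : Vd d → ℂ) ξ)) x ≤
              ENNReal.ofReal (A * B) *
                (∑' k : ℤ,
                  (HLMax (HLMax (HLMax (fun y =>
                    (‖FTinv (fun ξ => (ψ ((2:ℝ) ^ (-k) • ξ) : ℂ) *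
                        FT (f : Vd d → ℂ) ξ) y‖₊ : ℝ≥0∞) ^ r))) x) ^ (2 / r)) ^ (1/2 : ℝ) := by
  have hF (f : SchwartzMap (Vd d) ℂ) : Integrable (FT f) := by
    rw [FT_eq_fourier, ← SchwartzMap.fourier_coe]
    exact SchwartzMap.integrable _
  obtain ⟨A, hA, h⟩ := stmt_14_general hr1 hφ.continuous hφs hφ1 hη0.continuous.measurable hη01
    hη0s hψ hψc (image_eq_zero_of_notMem_tsupport hψ0) fun ξ hξ => hψ1 ξ (subset_tsupport φ hξ)
  exact ⟨A, hA, fun m B hm hmb hY f =>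
    .of_forall (h m B hm hmb hY f f.integrable (hF f))⟩
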